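/- (Two-dimensional resolution of singularities.) Let S be real analytic on a neighborhood of the origin in ℝ², not identically zero, with S(0,0) = 0, and let b > 0 be such that the lowest-degree part of S does not vanish on the lines bounding the triangle except at the origin. Then there exist a > 0 and a positive integer N such that, with F_a = {(x,y) : 0 ≤ x ≤ a, 0 ≤ y ≤ bx}, one can write F_a = ∪_{i=1}^n cl(D_i), where for each i there exist: a function k_i with k_i(x) = l_i x^{s_i} + higher order terms, s_i ≥ 1, and x ↦ k_i(x^N) real analytic; a map η_i(x,y) = (x, ±y + k_i(x)); a set D_i' = {(x,y) : 0 < x < a, g_i(x) < y < G_i(x)} with η_i(D_i') = D_i, where g_i(x^N) and G_i(x^N) are real analytic and G_i(x) = H_i x^{M_i} + higher order terms with M_i ≥ 1, H_i > 0; a nonnegative rational α_i; a nonnegative integer β_i; and d_i ≠ 0, such that: (a) if β_i = 0 then g_i ≡ 0, G_i(x) = H_i x^{M_i} exactly, and for any predetermined η > 0 the D_i' can be constructed so that on D_i', for all integers 0 ≤ l ≤ α_i, |∂_x^l(S∘η_i)(x,y) − d_i α_i(α_i−1)⋯(α_i−l+1) x^{α_i−l}| < η |d_i| x^{α_i−l};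 (b) if β_i > 0 then g_i is identically zero or g_i(x) = h_i x^{m_i} + higher order terms with h_i > 0, m_i > M_i, and for any predetermined η > 0 the D_i' can be constructed so that on D_i', for all integers 0 ≤ l ≤ α_i and 0 ≤ m ≤ β_i, |∂_x^l ∂_y^m (S∘η_i)(x,y) − α_i(α_i−1)⋯(α_i−l+1) β_i(β_i−1)⋯(β_i−m+1) d_i x^{α_i−l} y^{β_i−m}| ≤ η |d_i| x^{α_i−l} y^{β_i−m}. -/

import Mathlib

open MeasureTheory Real Set Filter Metric
open scoped Topology ENNReal

noncomputable section

/-- The Euclidean magnitude `|(x,y)| = √(x²+y²)` of a point of `ℝ²`. -/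
def nrm2 (p : ℝ × ℝ) : ℝ := Real.sqrt (p.1 ^ 2 + p.2 ^ 2)

/-- The open Euclidean disk `{(x,y) : x²+y² < r²}` centered at the origin. -/
def disk2 (r : ℝ) : Set (ℝ × ℝ) := {p : ℝ × ℝ | p.1 ^ 2 + p.2 ^ 2 < r ^ 2}

/-- The closed Euclidean disk `{(x,y) : x²+y² ≤ r²}` centered at the origin. -/
def closedDisk2 (r : ℝ) : Set (ℝ × ℝ) := {p : ℝ × ℝ | p.1 ^ 2 + p.2 ^ 2 ≤ r ^ 2}

/-- The circle `{(x,y) : x²+y² = r²}` centered at the origin. -/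
def circle2 (r : ℝ) : Set (ℝ × ℝ) := {p : ℝ × ℝ | p.1 ^ 2 + p.2 ^ 2 = r ^ 2}

/-- Dot product on `ℝ²`. -/
def dot2 (p q : ℝ × ℝ) : ℝ := p.1 * q.1 + p.2 * q.2

/-- The perpendicular vector `v^⊥ = (v₂, −v₁)`. -/
def perp2 (v : ℝ × ℝ) : ℝ × ℝ := (v.2, -v.1)

/-- The function `g = χ_E · ∏ᵢ |fᵢ|^(γᵢ)`. -/
def stdFun (n : ℕ) (f : Fin n → ℝ × ℝ → ℝ) (γ : Fin n → ℝ) (E : Set (ℝ × ℝ)) :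
    ℝ × ℝ → ℝ :=
  E.indicator fun p => ∏ i, |f i p| ^ (γ i)

/-- A boundary curve for the region `E`: one half of a graph `y = h(|x|^{1/N})` or
`x = h(|y|^{1/N})` with `h` real analytic, `h 0 = 0`, joining the origin to the circle
of radius `r₀`. -/
def IsPuiseuxBdryCurve (r₀ : ℝ) (C : Set (ℝ × ℝ)) : Prop :=
  ∃ (N : ℕ) (h : ℝ → ℝ) (I : Set ℝ) (σ : ℝ),
    0 < N ∧ (σ = 1 ∨ σ = -1) ∧ IsOpen I ∧ Icc (0:ℝ) (r₀ ^ ((N:ℝ)⁻¹)) ⊆ I ∧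
    AnalyticOnNhd ℝ h I ∧ h 0 = 0 ∧
    (C = {p : ℝ × ℝ | p ∈ closedDisk2 r₀ ∧ 0 ≤ σ * p.1 ∧
            p.2 = h (|p.1| ^ ((N:ℝ)⁻¹))} ∨
     C = {p : ℝ × ℝ | p ∈ closedDisk2 r₀ ∧ 0 ≤ σ * p.2 ∧
            p.1 = h (|p.2| ^ ((N:ℝ)⁻¹))}) ∧
    (0:ℝ×ℝ) ∈ C ∧ ∃ p ∈ C, nrm2 p = r₀

/-- The admissible form of the set `E`: either a disk centered at the origin, or a finite
disjoint union of open regions, each bounded by two Puiseux boundary curves joining the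
origin to the circle of radius `r₀` together with an arc of that circle, where all the
boundary curves are pairwise disjoint in the closed disk minus the origin. -/
def IsStdDomain (E : Set (ℝ × ℝ)) : Prop :=
  (∃ r₀ > (0:ℝ), E = disk2 r₀) ∨
  (∃ r₀ > (0:ℝ), ∃ m : ℕ, ∃ Es : Fin m → Set (ℝ × ℝ), ∃ Cs : Fin m → Fin 2 → Set (ℝ × ℝ),
    E = Set.iUnion Es ∧
    (Pairwise fun i j => Disjoint (Es i) (Es j)) ∧
    (∀ i, IsOpen (Es i) ∧ Es i ⊆ disk2 r₀ ∧ (0:ℝ×ℝ) ∈ closure (Es i) ∧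
      frontier (Es i) ⊆ Cs i 0 ∪ Cs i 1 ∪ circle2 r₀) ∧
    (∀ i j, IsPuiseuxBdryCurve r₀ (Cs i j)) ∧
    (Pairwise fun (q q' : Fin m × Fin 2) =>
      Disjoint (Cs q.1 q.2 ∩ (closedDisk2 r₀ \ {0}))
               (Cs q'.1 q'.2 ∩ (closedDisk2 r₀ \ {0}))))

/-- The standard form of the paper: the `fᵢ` are real analytic and not identically zero
near the origin, `g = χ_E ∏ |fᵢ|^(γᵢ)` is integrable near the origin, and `E` is an
admissible domain. -/
structure StandardForm (n : ℕ) (f : Fin n → ℝ × ℝ → ℝ) (γ : Fin n → ℝ)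
    (E : Set (ℝ × ℝ)) : Prop where
  analytic : ∃ U ∈ 𝓝 (0 : ℝ × ℝ), ∀ i, AnalyticOnNhd ℝ (f i) U
  nontriv : ∀ i, ¬ (∀ᶠ p in 𝓝 (0 : ℝ × ℝ), f i p = 0)
  integ : ∃ U ∈ 𝓝 (0 : ℝ × ℝ), IntegrableOn (stdFun n f γ E) U
  domain : IsStdDomain E

/-- The two-sided bound `c₁ rᵉ |log r|^d ≤ ∫_{x²+y²<r²} g ≤ c₂ rᵉ |log r|^d` for all small
`r` ("ball exponents" `ε`, `d` of `g`, as in Lemma 1.1). -/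
def BallBound (g : ℝ × ℝ → ℝ) (ε : ℝ) (d : ℕ) : Prop :=
  0 < ε ∧ d ≤ 1 ∧ ∃ c₁ > (0:ℝ), ∃ c₂ > (0:ℝ), ∃ c₃ > (0:ℝ), ∀ r : ℝ, 0 < r → r < c₃ →
    c₁ * r ^ ε * |Real.log r| ^ d ≤ (∫ p in disk2 r, g p) ∧
    (∫ p in disk2 r, g p) ≤ c₂ * r ^ ε * |Real.log r| ^ d

/-- The strip `{(x,y) : |(x,y)·v| < r, |(x,y)·v^⊥| < c}`. -/
def strip2 (v : ℝ × ℝ) (r c : ℝ) : Set (ℝ × ℝ) :=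
  {p : ℝ × ℝ | |dot2 p v| < r ∧ |dot2 p (perp2 v)| < c}

/-- The two-sided bound `a r^δ |log r|^e ≤ ∫_{strip} g ≤ b r^δ |log r|^e` for all small `r`,
for every small `c` ("strip exponents" `δ_v`, `e_v` of `g` in the direction `v`, as in
Lemma 1.2). -/
def StripBound (g : ℝ × ℝ → ℝ) (v : ℝ × ℝ) (δ : ℝ) (e : ℕ) : Prop :=
  0 < δ ∧ e ≤ 1 ∧ ∃ cv > (0:ℝ), ∀ c : ℝ, 0 < c → c < cv →
    ∃ a > (0:ℝ), ∃ b > (0:ℝ), ∀ r : ℝ, 0 < r → r < c →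
      a * r ^ δ * |Real.log r| ^ e ≤ (∫ p in strip2 v r c, g p) ∧
      (∫ p in strip2 v r c, g p) ≤ b * r ^ δ * |Real.log r| ^ e

/-- The order of vanishing of `f` at the origin. -/
def vanishingOrder (f : ℝ × ℝ → ℝ) : ℕ :=
  sInf {k : ℕ | iteratedFDeriv ℝ k f 0 ≠ 0}

/-- (A constant multiple of) the sum of the terms of lowest total degree in the Taylor
expansion of `f` at the origin, as a homogeneous function on `ℝ²`. -/
def lowestPart (f : ℝ × ℝ → ℝ) (p : ℝ × ℝ) : ℝ :=
  iteratedFDeriv ℝ (vanishingOrder f) f 0 (fun _ => p)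

/-- `w` is a tangent direction of the set `C` at the origin. -/
def IsTangentDirAt (C : Set (ℝ × ℝ)) (w : ℝ × ℝ) : Prop :=
  ∃ p : ℕ → ℝ × ℝ, (∀ k, p k ∈ C ∧ p k ≠ 0) ∧
    Tendsto p atTop (𝓝 (0:ℝ×ℝ)) ∧
    (Tendsto (fun k => (nrm2 (p k))⁻¹ • p k) atTop (𝓝 w) ∨
     Tendsto (fun k => (nrm2 (p k))⁻¹ • p k) atTop (𝓝 (-w)))

/-- `w` is the direction of one of the lines `l₁, …, l_p`: a line through the origin in the
zero set of the lowest-degree Taylor part of some `fᵢ`, or a tangent line at the origin to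
one of the boundary curves of `E`. -/
def ExceptionalDir (n : ℕ) (f : Fin n → ℝ × ℝ → ℝ) (E : Set (ℝ × ℝ)) (w : ℝ × ℝ) : Prop :=
  (∃ i, lowestPart (f i) w = 0) ∨ IsTangentDirAt (frontier E) w

/-- Conditions (1.2)-(1.3) on the factor `α`: `C¹` away from the origin, bounded by `A`,
with gradient bounded by `A (x²+y²)^{-1/2}`. -/
def AlphaBound (α : ℝ × ℝ → ℝ) (A : ℝ) : Prop :=
  ContDiffOn ℝ 1 α {(0:ℝ×ℝ)}ᶜ ∧ (∀ p, |α p| ≤ A) ∧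
  ∀ p : ℝ × ℝ, p ≠ 0 → ‖fderiv ℝ α p‖ ≤ A * (nrm2 p)⁻¹

/-- A smooth bump function equal to `1` near `(x₀, y₀)`, supported within (Euclidean)
distance `r` of `(x₀, y₀)`. -/
def IsBump (φ : ℝ × ℝ → ℝ) (x₀ y₀ : ℝ) (r : ℝ) : Prop :=
  ContDiff ℝ (⊤ : ℕ∞) φ ∧ HasCompactSupport φ ∧ (∀ᶠ p in 𝓝 ((x₀, y₀) : ℝ × ℝ), φ p = 1) ∧
    tsupport φ ⊆ {p : ℝ × ℝ | (p.1 - x₀) ^ 2 + (p.2 - y₀) ^ 2 < r ^ 2}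

/-- The oscillatory integral `∫_S h(x,y) e^{i(tx+uy)} dx dy`. -/
def oscInt (h : ℝ × ℝ → ℝ) (S : Set (ℝ × ℝ)) (t u : ℝ) : ℂ :=
  ∫ p in S, (h p : ℂ) * Complex.exp (Complex.I * ((t : ℂ) * (p.1 : ℂ) + (u : ℂ) * (p.2 : ℂ)))

/-- The convolution kernel `K(t,u) = ∫ m(x,y) e^{i(tx+uy)} dx dy`. -/
def Kfull (m : ℝ × ℝ → ℝ) (t u : ℝ) : ℂ :=
  oscInt m Set.univ t u

/-- The localized kernel `K_φ(t,u) = ∫ φ(x,y) m(x,y) e^{i(tx+uy)} dx dy`. -/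
def Kphi (φ m : ℝ × ℝ → ℝ) (t u : ℝ) : ℂ :=
  oscInt (fun p => φ p * m p) Set.univ t u

/-- `k` is a Puiseux function of index `N` on `[0,a]`: `k(x) = k'(x^{1/N})` for a function
`k'` real analytic on an open set containing `[0, a^{1/N}]`; equivalently `x ↦ k(x^N)` is
real analytic. -/
def PuiseuxOn (N : ℕ) (a : ℝ) (k : ℝ → ℝ) : Prop :=
  ∃ (k' : ℝ → ℝ) (I : Set ℝ), IsOpen I ∧ Icc (0:ℝ) (a ^ ((N:ℝ)⁻¹)) ⊆ I ∧
    AnalyticOnNhd ℝ k' I ∧ ∀ x ∈ Icc (0:ℝ) a, k x = k' (x ^ ((N:ℝ)⁻¹))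

/-- `k(x) = l·x^s + higher order terms` as `x → 0⁺`. -/
def LeadingTerm (k : ℝ → ℝ) (l s : ℝ) : Prop :=
  Tendsto (fun x => k x / x ^ s) (𝓝[>] (0:ℝ)) (𝓝 l)

/-- The mixed partial derivative `∂_x^l ∂_y^m F`. -/
def pderiv2 (l m : ℕ) (F : ℝ × ℝ → ℝ) (p : ℝ × ℝ) : ℝ :=
  iteratedDeriv l (fun x => iteratedDeriv m (fun y => F (x, y)) p.2) p.1

/-- The descending product `α(α−1)⋯(α−l+1)`. -/
def descProd (α : ℝ) (l : ℕ) : ℝ := ∏ j ∈ Finset.range l, (α - (j : ℝ))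

/-- The sliver `{(x,y) : 0 < x < a, g(x) < y < G(x)}`. -/
def sliverSet (a : ℝ) (g G : ℝ → ℝ) : Set (ℝ × ℝ) :=
  {q : ℝ × ℝ | 0 < q.1 ∧ q.1 < a ∧ g q.1 < q.2 ∧ q.2 < G q.1}

/-- A wedge of radius `r₀` at the origin: a region bounded by two lines through the origin
and the circle of radius `r₀`. -/
def IsWedge (r₀ : ℝ) (W : Set (ℝ × ℝ)) : Prop :=
  ∃ θ₁ θ₂ : ℝ, θ₁ < θ₂ ∧ θ₂ ≤ θ₁ + 2 * π ∧
    W = {p : ℝ × ℝ | ∃ ρ θ : ℝ, 0 < ρ ∧ ρ < r₀ ∧ θ₁ < θ ∧ θ < θ₂ ∧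
      p = (ρ * Real.cos θ, ρ * Real.sin θ)}

/-- telescoping series -/
noncomputable def hadSeries {E : Type*} [NormedAddCommGroup E] [NormedSpace ℝ E]
    (p : FormalMultilinearSeries ℝ E ℝ) (P : E →L[ℝ] E) (e : E) :
    FormalMultilinearSeries ℝ E ℝ := fun n =>
  ∑ i : Fin (n+1), (ContinuousMultilinearMap.curryMid i (p (n+1)) e).compContinuousLinearMap
    (fun j => if j.castSucc < i then ContinuousLinearMap.id ℝ E else P)

theorem hadSeries_apply {E : Type*} [NormedAddCommGroup E] [NormedSpace ℝ E]
    (p : FormalMultilinearSeries ℝ E ℝ) (P : E →L[ℝ] E) (e : E) (n : ℕ) (z : E) (c : ℝ)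
    (hz : z - P z = c • e) :
    c * hadSeries p P e n (fun _ => z) = p (n+1) (fun _ => z) - p (n+1) (fun _ => P z) := by
  have key : ∀ i : Fin (n+1), c * (ContinuousMultilinearMap.curryMid i (p (n+1)) e).compContinuousLinearMap
    (fun j => if j.castSucc < i then ContinuousLinearMap.id ℝ E else P) (fun _ => z)
     = (fun m : ℕ => p (n+1) (fun j => if (j:ℕ) < m then z else P z)) (i+1)
      - (fun m : ℕ => p (n+1) (fun j => if (j:ℕ) < m then z else P z)) i := by
    intro i
    have h1 := (p (n+1)).map_update_sub (fun j : Fin (n+1) => if (j:ℕ) < i then z else P z) i z (P z)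
    rw [hz, ContinuousMultilinearMap.map_update_smul] at h1
    simp only [ContinuousMultilinearMap.compContinuousLinearMap_apply, ContinuousMultilinearMap.curryMid_apply]
    have e1 : (Function.update (fun j : Fin (n+1) => if (j:ℕ) < i then z else P z) i z)
        = fun j : Fin (n+1) => if (j:ℕ) < i+1 then z else P z := by
      ext1 j
      by_cases h : j = i
      · subst h; simp
      · have : (j:ℕ) ≠ i := fun h' => h (Fin.ext h')
        rw [Function.update_of_ne h]
        by_cases h2 : (j:ℕ) < i
        · rw [if_pos h2, if_pos (by omega)]
        · rw [if_neg h2, if_neg (by omega)]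
    have e2 : (Function.update (fun j : Fin (n+1) => if (j:ℕ) < i then z else P z) i (P z))
        = fun j : Fin (n+1) => if (j:ℕ) < i then z else P z := by
      rw [Function.update_eq_self_iff]; simp
    have e3 : (Function.update (fun j : Fin (n+1) => if (j:ℕ) < i then z else P z) i e)
        = i.insertNth e fun j : Fin n => (if j.castSucc < i then ContinuousLinearMap.id ℝ E else P) z := by
      ext1 j
      refine Fin.succAboveCases i ?_ ?_ j
      · simp
      · intro k
        rw [Function.update_of_ne (Fin.succAbove_ne i k)]
        simp only [Fin.insertNth_apply_succAbove]
        by_cases h : k.castSucc < i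
        · rw [Fin.succAbove_of_castSucc_lt _ _ h, if_pos h, if_pos]
          · rfl
          · exact h
        · rw [Fin.succAbove_of_le_castSucc _ _ (not_lt.1 h), if_neg h, if_neg]
          have : (i:ℕ) ≤ k := by simpa [Fin.le_def] using h
          simp; omega
    rw [e1, e2, e3] at h1
    simpa using h1
  have hT0 : (fun m : ℕ => p (n+1) (fun j => if (j:ℕ) < m then z else P z)) 0 = p (n+1) (fun _ => P z) := by
    simp
  have hT1 : (fun m : ℕ => p (n+1) (fun j => if (j:ℕ) < m then z else P z)) (n+1) = p (n+1) (fun _ => z) := by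
    have : (fun j : Fin (n+1) => if (j:ℕ) < n+1 then z else P z) = fun _ => z := by
      ext1 j; rw [if_pos j.2]
    exact congrArg (p (n+1)) this
  generalize (fun m : ℕ => p (n+1) (fun j => if (j:ℕ) < m then z else P z)) = T at key hT0 hT1
  unfold hadSeries
  rw [_root_.sum_apply, Finset.mul_sum, Finset.sum_congr rfl (fun i _ => key i)]
  rw [Fin.sum_univ_eq_sum_range (fun i => T (i+1) - T i), Finset.sum_range_sub, hT0, hT1]

theorem hadSeries_norm {E : Type*} [NormedAddCommGroup E] [NormedSpace ℝ E]
    (p : FormalMultilinearSeries ℝ E ℝ) (P : E →L[ℝ] E) (e : E) (n : ℕ) :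
    ‖hadSeries p P e n‖ ≤ (n+1) * (‖p (n+1)‖ * ‖e‖ * (1 + ‖P‖)^n) := by
  unfold hadSeries
  refine (norm_sum_le _ _).trans ?_
  have : ∀ i : Fin (n+1), ‖(ContinuousMultilinearMap.curryMid i (p (n+1)) e).compContinuousLinearMap
    (fun j => if j.castSucc < i then ContinuousLinearMap.id ℝ E else P)‖ ≤ ‖p (n+1)‖ * ‖e‖ * (1 + ‖P‖)^n := by
    intro i
    refine (ContinuousMultilinearMap.norm_compContinuousLinearMap_le _ _).trans ?_
    gcongr
    · refine (ContinuousLinearMap.le_opNorm _ _).trans ?_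
      rw [ContinuousMultilinearMap.norm_curryMid]
    · refine (Finset.prod_le_prod (g := fun _ => 1 + ‖P‖) (fun _ _ => norm_nonneg _) ?_).trans (by simp)
      intro j _
      split_ifs
      · have := ContinuousLinearMap.norm_id_le (𝕜 := ℝ) (E := E)
        have := norm_nonneg P
        linarith
      · linarith
  refine (Finset.sum_le_sum (fun i _ => this i)).trans ?_
  simp

theorem hadamard {E : Type*} [NormedAddCommGroup E] [NormedSpace ℝ E]
    (f : E → ℝ) (hf : AnalyticAt ℝ f 0) (P : E →L[ℝ] E) (e : E) (c : E → ℝ)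
    (hz : ∀ z, z - P z = c z • e) :
    ∃ u : E → ℝ, AnalyticAt ℝ u 0 ∧ ∀ᶠ z in 𝓝 0, f z = f (P z) + c z * u z := by
  obtain ⟨p, r, hp⟩ := hf
  obtain ⟨ρ, hρ0, hρ⟩ := ENNReal.lt_iff_exists_nnreal_btwn.1 hp.r_pos
  have hρ0' : 0 < ρ := by exact_mod_cast hρ0
  obtain ⟨C, hC, hb⟩ := p.norm_le_div_pow_of_pos_of_lt_radius hρ0' (hρ.trans_le hp.r_le)
  set q := hadSeries p P e with hq
  have hqr : 0 < q.radius := by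
    set s : NNReal := ρ / (2 * (1 + ‖P‖₊)) with hs
    have hs0 : 0 < s := by positivity
    refine lt_of_lt_of_le (by exact_mod_cast hs0 : (0:ℝ≥0∞) < s) (q.le_radius_of_bound (C / ρ * ‖e‖) ?_)
    intro n
    have h1 := hadSeries_norm p P e n
    have h2 := hb (n+1)
    have hP : (0:ℝ) < 1 + ‖P‖ := by positivity
    have hr : (0:ℝ) < ρ := by exact_mod_cast hρ0'
    have h3 : ((n:ℝ)+1) ≤ 2^n := by exact_mod_cast Nat.lt_two_pow_self
    have hsr : (s:ℝ) = ρ / (2 * (1 + ‖P‖)) := by simp [hs]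
    calc ‖q n‖ * (s:ℝ)^n ≤ (2^n * (C / ρ^(n+1) * ‖e‖ * (1 + ‖P‖)^n)) * (s:ℝ)^n := by
          gcongr
          refine h1.trans ?_
          gcongr
      _ = C / ρ * ‖e‖ := by
          rw [hsr, div_pow, mul_pow]
          field_simp
          ring
  have hqs := q.hasFPowerSeriesOnBall hqr
  refine ⟨q.sum, hqs.analyticAt, ?_⟩
  have e1 : ∀ᶠ z in 𝓝 (0:E), z ∈ Metric.eball (0:E) r := Metric.eball_mem_nhds _ hp.r_pos
  have e2 : ∀ᶠ z in 𝓝 (0:E), P z ∈ Metric.eball (0:E) r := by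
    have : Tendsto P (𝓝 0) (𝓝 0) := by simpa using P.continuous.tendsto 0
    exact this.eventually (Metric.eball_mem_nhds _ hp.r_pos)
  have e3 : ∀ᶠ z in 𝓝 (0:E), z ∈ Metric.eball (0:E) q.radius := Metric.eball_mem_nhds _ hqr
  filter_upwards [e1, e2, e3] with z h1 h2 h3
  have s1 := hp.hasSum h1
  have s2 := hp.hasSum h2
  have s3 := (hqs.hasSum h3).mul_left (c z)
  have s4 := s1.sub s2
  rw [← hasSum_nat_add_iff' 1] at s4
  simp only [zero_add, Finset.range_one, Finset.sum_singleton] at s3 s4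
  have e : (fun i => c z * q i fun _ => z) = fun n => (p (n+1) fun _ => z) - p (n+1) fun _ => P z := by
    ext1 n
    exact hadSeries_apply p P e n z (c z) (hz z)
  rw [e] at s3
  have := s3.unique s4
  have e0 : (p 0 fun _ => z) - (p 0 fun _ => P z) = 0 := by
    rw [sub_eq_zero]; congr 1; ext i; exact i.elim0
  linarith

theorem had_w (F : ℝ × ℝ → ℝ) (hF : AnalyticAt ℝ F 0) :
    ∃ u : ℝ × ℝ → ℝ, AnalyticAt ℝ u 0 ∧ ∀ᶠ z in 𝓝 (0:ℝ×ℝ), F z = F (z.1, 0) + z.2 * u z := by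
  obtain ⟨u, hu, h⟩ := hadamard F hF ((ContinuousLinearMap.fst ℝ ℝ ℝ).prod 0) (0,1) (fun z => z.2)
    (by intro z; ext <;> simp)
  exact ⟨u, hu, by simpa using h⟩

theorem had_x (F : ℝ × ℝ → ℝ) (hF : AnalyticAt ℝ F 0) :
    ∃ u : ℝ × ℝ → ℝ, AnalyticAt ℝ u 0 ∧ ∀ᶠ z in 𝓝 (0:ℝ×ℝ), F z = F (0, z.2) + z.1 * u z := by
  obtain ⟨u, hu, h⟩ := hadamard F hF ((0 : ℝ×ℝ →L[ℝ] ℝ).prod (ContinuousLinearMap.snd ℝ ℝ ℝ)) (1,0) (fun z => z.1)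
    (by intro z; ext <;> simp)
  exact ⟨u, hu, by simpa using h⟩

noncomputable def dw (F : ℝ × ℝ → ℝ) : ℝ × ℝ → ℝ := fun p => fderiv ℝ F p (0, 1)

theorem dw_analytic {F : ℝ × ℝ → ℝ} {p : ℝ × ℝ} (hF : AnalyticAt ℝ F p) : AnalyticAt ℝ (dw F) p :=
  ((ContinuousLinearMap.apply ℝ ℝ ((0:ℝ), (1:ℝ))).analyticAt _).comp hF.fderiv

theorem dw_iter_analytic {F : ℝ × ℝ → ℝ} {p : ℝ × ℝ} (hF : AnalyticAt ℝ F p) (j : ℕ) :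
    AnalyticAt ℝ (dw^[j] F) p := by
  induction j with
  | zero => exact hF
  | succ j ih => rw [Function.iterate_succ_apply']; exact dw_analytic ih

theorem dw_congr {F G : ℝ × ℝ → ℝ} {p : ℝ × ℝ} (h : F =ᶠ[𝓝 p] G) : dw F =ᶠ[𝓝 p] dw G := by
  filter_upwards [h.fderiv (𝕜 := ℝ)] with z hz
  simp [dw, hz]

theorem dw_iter_congr {F G : ℝ × ℝ → ℝ} {p : ℝ × ℝ} (h : F =ᶠ[𝓝 p] G) (j : ℕ) :
    dw^[j] F =ᶠ[𝓝 p] dw^[j] G := by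
  induction j with
  | zero => exact h
  | succ j ih => rw [Function.iterate_succ_apply', Function.iterate_succ_apply']; exact dw_congr ih

theorem dw_hasDerivAt {F : ℝ × ℝ → ℝ} {p : ℝ × ℝ} (hF : AnalyticAt ℝ F p) :
    HasDerivAt (fun w => F (p.1, w)) (dw F p) p.2 := by
  have h1 : HasFDerivAt F (fderiv ℝ F p) (p.1, p.2) := hF.differentiableAt.hasFDerivAt
  have h2 : HasDerivAt (fun w : ℝ => ((p.1, w) : ℝ × ℝ)) (0, 1) p.2 :=
    (hasDerivAt_const _ _).prodMk (hasDerivAt_id _)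
  exact h1.comp_hasDerivAt p.2 h2

theorem ift (G : ℝ × ℝ → ℝ) (hG : AnalyticAt ℝ G 0) (h0 : G 0 = 0) (h1 : dw G 0 ≠ 0) :
    ∃ φ : ℝ → ℝ, AnalyticAt ℝ φ 0 ∧ φ 0 = 0 ∧ ∀ᶠ t in 𝓝 (0:ℝ), G (t, φ t) = 0 := by
  have hc : ContDiffAt ℝ (⊤ : WithTop ℕ∞) G 0 := hG.contDiffAt
  have hinv : (fderiv ℝ G 0 ∘L ContinuousLinearMap.inr ℝ ℝ ℝ).IsInvertible := by
    refine ⟨ContinuousLinearEquiv.unitsEquivAut ℝ (Units.mk0 _ h1), ?_⟩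
    ext
    simp [dw]
  refine ⟨hc.implicitFunction (by simp) hinv, ?_, ?_, ?_⟩
  · exact (hc.contDiffAt_implicitFunction (by simp) hinv).analyticAt
  · exact hc.implicitFunction_apply_self (by simp) hinv
  · have := hc.eventually_apply_implicitFunction (by simp) hinv
    simpa [h0] using this

theorem dw_leib {F u : ℝ × ℝ → ℝ} {c : ℝ → ℝ} (hu : AnalyticAt ℝ u 0) (hc : AnalyticAt ℝ c 0)
    (h : ∀ᶠ z in 𝓝 (0:ℝ×ℝ), F z = c z.1 + z.2 * u z) (j : ℕ) :
    ∀ᶠ z in 𝓝 (0:ℝ×ℝ), (dw^[j+1] F) z = z.2 * (dw^[j+1] u) z + (j+1) * (dw^[j] u) z := by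
  induction j with
  | zero =>
    have h1 : F =ᶠ[𝓝 0] fun z => c z.1 + z.2 * u z := h
    have hc' : ∀ᶠ z in 𝓝 (0:ℝ×ℝ), AnalyticAt ℝ c z.1 :=
      (continuous_fst.tendsto (0:ℝ×ℝ)).eventually hc.eventually_analyticAt
    filter_upwards [dw_congr h1, hu.eventually_analyticAt, hc'] with z h2 h3 h4
    simp only [zero_add, Function.iterate_one, h2, Function.iterate_zero, id]
    have e1 : HasDerivAt (fun w => c z.1 + w * u (z.1, w)) (1 * u z + z.2 * dw u z) z.2 :=
      ((hasDerivAt_id z.2).mul (dw_hasDerivAt h3)).const_add _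
    have e2 := dw_hasDerivAt (F := fun z => c z.1 + z.2 * u z) (p := z)
      ((h4.comp analyticAt_fst).add (analyticAt_snd.mul h3))
    rw [e2.unique e1]; push_cast; ring
  | succ j ih =>
    have h1 : dw^[j+1] F =ᶠ[𝓝 0] fun z => z.2 * (dw^[j+1] u) z + (j+1) * (dw^[j] u) z := ih
    rw [Function.iterate_succ_apply']
    filter_upwards [dw_congr h1, hu.eventually_analyticAt] with z h2 h3
    rw [h2]
    have a1 := dw_iter_analytic h3 (j+1)
    have a0 := dw_iter_analytic h3 j
    have e1 := ((hasDerivAt_id z.2).mul (dw_hasDerivAt a1)).add ((dw_hasDerivAt a0).const_mul ((j:ℝ)+1))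
    have e2 := dw_hasDerivAt (F := fun z => z.2 * (dw^[j+1] u) z + (j+1) * (dw^[j] u) z) (p := z)
      ((analyticAt_snd.mul a1).add (analyticAt_const.mul a0))
    rw [e2.unique e1, Function.iterate_succ_apply' dw (j+1), Function.iterate_succ_apply' dw j]
    push_cast
    simp only [id]
    ring

theorem taylor_w (n : ℕ) : ∀ (F : ℝ × ℝ → ℝ), AnalyticAt ℝ F 0 →
    ∃ (c : ℕ → ℝ → ℝ) (u : ℝ × ℝ → ℝ), (∀ j, AnalyticAt ℝ (c j) 0) ∧ AnalyticAt ℝ u 0 ∧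
      (∀ᶠ z in 𝓝 (0:ℝ×ℝ), F z = ∑ j ∈ Finset.range n, c j z.1 * z.2 ^ j + z.2 ^ n * u z) ∧
      (∀ j < n, ∀ᶠ t in 𝓝 (0:ℝ), (dw^[j] F) (t, 0) = j.factorial * c j t) ∧
      (dw^[n] F) 0 = n.factorial * u 0 := by
  induction n with
  | zero =>
    intro F hF
    exact ⟨fun _ _ => 0, F, fun _ => analyticAt_const, hF, by simp, by simp, by simp⟩
  | succ n ih =>
    intro F hF
    obtain ⟨F1, hF1, h⟩ := had_w F hF
    obtain ⟨c, u, hc, hu, h1, h2, h3⟩ := ih F1 hF1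
    have hc0 : AnalyticAt ℝ (fun t => F (t, 0)) 0 :=
      AnalyticAt.comp (g := F) (f := fun t : ℝ => ((t, 0) : ℝ × ℝ)) hF (analyticAt_id.prod analyticAt_const)
    have lb := fun j => dw_leib hF1 hc0 h j
    have tt : Tendsto (fun t : ℝ => ((t, 0) : ℝ × ℝ)) (𝓝 0) (𝓝 0) := by
      have : Continuous (fun t : ℝ => ((t, 0) : ℝ × ℝ)) := by fun_prop
      exact this.tendsto 0
    refine ⟨fun j => Nat.casesOn j (fun t => F (t, 0)) c, u, ?_, hu, ?_, ?_, ?_⟩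
    · rintro (_ | j)
      · exact hc0
      · exact hc j
    · filter_upwards [h, h1] with z e1 e2
      rw [Finset.sum_range_succ', e1, e2, mul_add, Finset.mul_sum]
      simp only [pow_zero, mul_one]
      have : ∀ j ∈ Finset.range n, z.2 * (c j z.1 * z.2 ^ j) = c j z.1 * z.2 ^ (j+1) := by
        intros; ring
      rw [Finset.sum_congr rfl this]
      show _ = _ + F (z.1, 0) + _
      ring
    · rintro (_ | j) hj
      · simp
      · filter_upwards [tt.eventually (lb j), h2 j (by omega)] with t e1 e2
        rw [e1, e2, Nat.factorial_succ]; push_cast; ring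
    · have := (lb n).self_of_nhds
      rw [this, h3, Nat.factorial_succ]; simp; ring

theorem dw_shift {F : ℝ × ℝ → ℝ} {φ : ℝ → ℝ} (hφ : AnalyticAt ℝ φ 0) (hF : AnalyticAt ℝ F (0, φ 0)) (j : ℕ) :
    ∀ᶠ z in 𝓝 (0:ℝ×ℝ), (dw^[j] (fun z => F (z.1, φ z.1 + z.2))) z = (dw^[j] F) (z.1, φ z.1 + z.2) := by
  induction j with
  | zero => exact Eventually.of_forall fun _ => rfl
  | succ j ih =>
    rw [Function.iterate_succ_apply', Function.iterate_succ_apply']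
    have hφ' : ∀ᶠ z in 𝓝 (0:ℝ×ℝ), AnalyticAt ℝ φ z.1 :=
      (continuous_fst.tendsto (0:ℝ×ℝ)).eventually hφ.eventually_analyticAt
    have t2 : Tendsto (fun z : ℝ × ℝ => (z.1, φ z.1 + z.2)) (𝓝 0) (𝓝 (0, φ 0)) := by
      have : ContinuousAt (fun z : ℝ × ℝ => (z.1, φ z.1 + z.2)) 0 :=
        continuousAt_fst.prodMk ((ContinuousAt.comp (f := Prod.fst) (x := (0:ℝ×ℝ)) hφ.continuousAt continuousAt_fst).add continuousAt_snd)
      simpa [ContinuousAt] using this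
    have ih' : (dw^[j] (fun z => F (z.1, φ z.1 + z.2))) =ᶠ[𝓝 0] fun z => (dw^[j] F) (z.1, φ z.1 + z.2) := ih
    filter_upwards [dw_congr ih', hφ', t2.eventually hF.eventually_analyticAt] with z h1 h2 h3
    rw [h1]
    have a := dw_iter_analytic h3 j
    have e1 := dw_hasDerivAt (F := fun z : ℝ × ℝ => (dw^[j] F) (z.1, φ z.1 + z.2)) (p := z)
      (AnalyticAt.fun_comp (f := fun z : ℝ × ℝ => (z.1, φ z.1 + z.2)) a
        (analyticAt_fst.prod ((h2.comp analyticAt_fst).add analyticAt_snd)))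
    have e2 := (dw_hasDerivAt a).comp_const_add (φ z.1) z.2
    exact e1.unique e2

theorem dw_poly {F : ℝ × ℝ → ℝ} (hF : AnalyticAt ℝ F 0) (Q : Polynomial ℝ)
    (h : ∀ᶠ w in 𝓝 (0:ℝ), F (0, w) = Q.eval w) (j : ℕ) :
    ∀ᶠ w in 𝓝 (0:ℝ), (dw^[j] F) (0, w) = (Polynomial.derivative^[j] Q).eval w := by
  induction j with
  | zero => exact h
  | succ j ih =>
    have tt : Tendsto (fun t : ℝ => ((0, t) : ℝ × ℝ)) (𝓝 0) (𝓝 0) := by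
      have : Continuous (fun t : ℝ => ((0, t) : ℝ × ℝ)) := by fun_prop
      exact this.tendsto 0
    filter_upwards [ih.eventually_nhds, tt.eventually hF.eventually_analyticAt] with w h1 h2
    have e1 := dw_hasDerivAt (dw_iter_analytic h2 j)
    have e2 := (Polynomial.hasDerivAt (Polynomial.derivative^[j] Q) w).congr_of_eventuallyEq h1
    rw [Function.iterate_succ_apply', Function.iterate_succ_apply']
    exact e1.unique e2

theorem euler_analytic {E : Type*} [NormedAddCommGroup E] [NormedSpace ℝ E]
    (A : E →L[ℝ] E) (V : Set E) (W : E → ℝ) (hW : AnalyticOnNhd ℝ W V) (c : ℝ) :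
    AnalyticOnNhd ℝ (fun z => c * W z + fderiv ℝ W z (A z)) V := by
  intro z hz
  have h1 := hW z hz
  have h2 : AnalyticAt ℝ (fun z => fderiv ℝ W z (A z)) z :=
    AnalyticAt.fun_comp (g := fun q : (E →L[ℝ] ℝ) × E => q.1 q.2) (f := fun z => (fderiv ℝ W z, A z))
      (ContinuousLinearMap.analyticAt_bilinear (ContinuousLinearMap.id ℝ (E →L[ℝ] ℝ)) _)
      (h1.fderiv.prod (A.analyticAt z))
  exact (analyticAt_const.mul h1).add h2

theorem leaf_deriv_x {E : Type*} [NormedAddCommGroup E] [NormedSpace ℝ E]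
    (Ω : Set (ℝ × ℝ)) (hΩ : IsOpen Ω) (hpos : ∀ p ∈ Ω, 0 < p.1)
    (Γ : ℝ × ℝ → E) (A : E →L[ℝ] E)
    (hx : ∀ p ∈ Ω, HasDerivAt (fun x => Γ (x, p.2)) (p.1⁻¹ • A (Γ p)) p.1)
    (V : Set E) (hΓ : ∀ p ∈ Ω, Γ p ∈ V) (U : E → ℝ) (hU : AnalyticOnNhd ℝ U V)
    (α : ℝ) (h : ℝ → ℝ) (Φ : ℝ × ℝ → ℝ) (hΦ : ∀ p ∈ Ω, Φ p = p.1 ^ α * h p.2 * U (Γ p)) (l : ℕ) :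
    ∃ W : E → ℝ, AnalyticOnNhd ℝ W V ∧ W 0 = descProd α l * U 0 ∧
      ∀ p ∈ Ω, iteratedDeriv l (fun x => Φ (x, p.2)) p.1 = p.1 ^ (α - l) * h p.2 * W (Γ p) := by
  induction l with
  | zero => exact ⟨U, hU, by simp [descProd], fun p hp => by simpa using hΦ p hp⟩
  | succ l ih =>
    obtain ⟨W, hW, hW0, hWp⟩ := ih
    refine ⟨fun z => (α - l) * W z + fderiv ℝ W z (A z), euler_analytic A V W hW _, ?_, ?_⟩
    · simp only [map_zero, hW0, add_zero]
      unfold descProd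
      rw [Finset.prod_range_succ]; ring
    · intro p hp
      have hev : ∀ᶠ x in 𝓝 p.1, (x, p.2) ∈ Ω := by
        have : Continuous (fun x : ℝ => (x, p.2)) := by fun_prop
        exact (this.tendsto p.1).eventually (hΩ.mem_nhds hp)
      have heq : iteratedDeriv l (fun x => Φ (x, p.2)) =ᶠ[𝓝 p.1]
          fun x => x ^ (α - l) * h p.2 * W (Γ (x, p.2)) := by
        filter_upwards [hev] with x hx'
        exact hWp _ hx'
      rw [iteratedDeriv_succ, heq.deriv_eq]
      have d1 : HasDerivAt (fun x : ℝ => x ^ (α - l)) ((α - l) * p.1 ^ (α - l - 1)) p.1 :=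
        Real.hasDerivAt_rpow_const (Or.inl (hpos p hp).ne')
      have d2 : HasDerivAt (fun x => W (Γ (x, p.2))) (fderiv ℝ W (Γ p) (p.1⁻¹ • A (Γ p))) p.1 :=
        HasFDerivAt.comp_hasDerivAt p.1 (hW _ (hΓ p hp)).differentiableAt.hasFDerivAt (hx p hp)
      have d3 := ((d1.mul_const (h p.2)).mul d2).deriv
      refine d3.trans ?_
      have e1 : p.1 ^ (α - l) = p.1 ^ (α - l - 1) * p.1 := by
        have := Real.rpow_add (hpos p hp) (α - l - 1) 1
        rw [Real.rpow_one] at this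
        rw [← this]; congr 1; ring
      have e2 : α - ((l+1 : ℕ):ℝ) = α - l - 1 := by push_cast; ring
      have := (hpos p hp).ne'
      rw [e1, e2, map_smul, smul_eq_mul]
      field_simp

theorem leaf_deriv {E : Type*} [NormedAddCommGroup E] [NormedSpace ℝ E]
    (Ω : Set (ℝ × ℝ)) (hΩ : IsOpen Ω) (hpos : ∀ p ∈ Ω, 0 < p.1 ∧ 0 < p.2)
    (Γ : ℝ × ℝ → E) (A B : E →L[ℝ] E)
    (hx : ∀ p ∈ Ω, HasDerivAt (fun x => Γ (x, p.2)) (p.1⁻¹ • A (Γ p)) p.1)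
    (hy : ∀ p ∈ Ω, HasDerivAt (fun y => Γ (p.1, y)) (p.2⁻¹ • B (Γ p)) p.2)
    (V : Set E) (hΓ : ∀ p ∈ Ω, Γ p ∈ V) (U : E → ℝ) (hU : AnalyticOnNhd ℝ U V)
    (α β : ℝ) (Φ : ℝ × ℝ → ℝ) (hΦ : ∀ p ∈ Ω, Φ p = p.1 ^ α * p.2 ^ β * U (Γ p)) (l m : ℕ) :
    ∃ W : E → ℝ, AnalyticOnNhd ℝ W V ∧ W 0 = descProd α l * descProd β m * U 0 ∧
      ∀ p ∈ Ω, pderiv2 l m Φ p = p.1 ^ (α - l) * p.2 ^ (β - m) * W (Γ p) := by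
  obtain ⟨W, hW, hW0, hWp⟩ := leaf_deriv_x (Prod.swap ⁻¹' Ω) (hΩ.preimage continuous_swap)
    (fun p hp => (hpos _ hp).2) (fun p => Γ p.swap) B (fun p hp => hy p.swap hp) V
    (fun p hp => hΓ _ hp) U hU β (fun x => x ^ α) (fun p => Φ p.swap)
    (fun p hp => by rw [hΦ _ hp]; simp only [Prod.fst_swap, Prod.snd_swap]; ring) m
  obtain ⟨W', hW', hW0', hWp'⟩ := leaf_deriv_x Ω hΩ (fun p hp => (hpos _ hp).1) Γ A hx V hΓ W hW α
    (fun y => y ^ (β - m)) (fun p => iteratedDeriv m (fun y => Φ (p.1, y)) p.2)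
    (fun p hp => by
      have := hWp p.swap (by simpa using hp)
      simp only [Prod.swap] at this
      simp only [this]; ring) l
  exact ⟨W', hW', by rw [hW0', hW0]; ring, fun p hp => hWp' p hp⟩

def Blk (S : ℝ × ℝ → ℝ) (ηc : ℝ) (N : ℕ) (a : ℝ) (D : Set (ℝ × ℝ)) : Prop :=
  ∃ (k g G : ℝ → ℝ) (σ li si Hi Mi αi di : ℝ) (βi : ℕ),
        (σ = 1 ∨ σ = -1) ∧
        PuiseuxOn N a k ∧ LeadingTerm k li si ∧ 1 ≤ si ∧
        PuiseuxOn N a g ∧ PuiseuxOn N a G ∧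
        LeadingTerm G Hi Mi ∧ 0 < Hi ∧ 1 ≤ Mi ∧
        (∃ q : ℚ, (q : ℝ) = αi) ∧ 0 ≤ αi ∧ di ≠ 0 ∧
        D = (fun q : ℝ × ℝ => (q.1, σ * q.2 + k q.1)) '' sliverSet a g G ∧
        ((βi = 0 ∧ (∀ x, g x = 0) ∧ (∀ x ∈ Ioo (0:ℝ) a, G x = Hi * x ^ Mi) ∧
          (∀ p ∈ sliverSet a g G, ∀ l : ℕ, (l : ℝ) ≤ αi →
            |pderiv2 l 0 (fun q => S (q.1, σ * q.2 + k q.1)) p -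
                di * descProd αi l * p.1 ^ (αi - l)| <
              ηc * |di| * p.1 ^ (αi - l))) ∨
         (0 < βi ∧
          ((∀ x, g x = 0) ∨ ∃ hi mi : ℝ, 0 < hi ∧ Mi < mi ∧ LeadingTerm g hi mi) ∧
          (∀ p ∈ sliverSet a g G, ∀ l : ℕ, (l : ℝ) ≤ αi → ∀ mm : ℕ, mm ≤ βi →
            |pderiv2 l mm (fun q => S (q.1, σ * q.2 + k q.1)) p -
                descProd αi l * descProd (βi : ℝ) mm * di *
                  p.1 ^ (αi - l) * p.2 ^ ((βi : ℝ) - (mm : ℝ))| ≤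
              ηc * |di| * p.1 ^ (αi - l) * p.2 ^ ((βi : ℝ) - (mm : ℝ)))))

def Good (S : ℝ × ℝ → ℝ) (ηc : ℝ) (N : ℕ) (D : Set (ℝ × ℝ)) : Prop :=
  ∀ᶠ a in 𝓝[>] (0:ℝ), Blk S ηc N a (D ∩ {p | p.1 < a})

theorem root_pow (N : ℕ) (hN : 0 < N) (x : ℝ) (hx : 0 ≤ x) : (x ^ ((N:ℝ)⁻¹)) ^ N = x :=
  Real.rpow_inv_natCast_pow hx hN.ne'

theorem pow_root (N : ℕ) (hN : 0 < N) (t : ℝ) (ht : 0 ≤ t) : (t ^ N) ^ ((N:ℝ)⁻¹) = t :=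
  Real.pow_rpow_inv_natCast ht hN.ne'

theorem root_pow' (N e : ℕ) (x : ℝ) (hx : 0 ≤ x) :
    x ^ ((e:ℝ) / N) = (x ^ ((N:ℝ)⁻¹)) ^ e := by
  rw [← Real.rpow_mul_natCast hx]; congr 1; ring

theorem puiseuxOn_pow (N e : ℕ) (a c : ℝ) : PuiseuxOn N a (fun x => c * (x ^ ((N:ℝ)⁻¹)) ^ e) :=
  ⟨fun t => c * t ^ e, univ, isOpen_univ, subset_univ _,
    fun t _ => analyticAt_const.mul (analyticAt_id.pow e), fun x _ => rfl⟩

theorem leading_pow (N e : ℕ) (c : ℝ) :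
    LeadingTerm (fun x => c * (x ^ ((N:ℝ)⁻¹)) ^ e) c ((e:ℝ) / N) := by
  unfold LeadingTerm
  refine Tendsto.congr' ?_ tendsto_const_nhds
  filter_upwards [self_mem_nhdsWithin] with x hx
  have hx' : (0:ℝ) < x := hx
  rw [← root_pow' N e x hx'.le]
  have : (0:ℝ) < x ^ ((e:ℝ)/N) := Real.rpow_pos_of_pos hx' _
  field_simp

theorem hasDerivAt_rpow_inv (e x : ℝ) (hx : 0 < x) :
    HasDerivAt (fun x : ℝ => x ^ e) (x⁻¹ * (e * x ^ e)) x := by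
  have := Real.hasDerivAt_rpow_const (x := x) (p := e) (Or.inl hx.ne')
  convert this using 1
  rw [Real.rpow_sub_one hx.ne']; field_simp

def GamA (e1 e2 e3 : ℝ) : ℝ × ℝ × ℝ →L[ℝ] ℝ × ℝ × ℝ :=
  (e1 • ContinuousLinearMap.fst ℝ ℝ (ℝ × ℝ)).prod
    ((e2 • (ContinuousLinearMap.fst ℝ ℝ ℝ ∘L ContinuousLinearMap.snd ℝ ℝ (ℝ × ℝ))).prod
     (e3 • (ContinuousLinearMap.snd ℝ ℝ ℝ ∘L ContinuousLinearMap.snd ℝ ℝ (ℝ × ℝ))))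

theorem GamA_apply (e1 e2 e3 : ℝ) (z : ℝ × ℝ × ℝ) :
    GamA e1 e2 e3 z = (e1 * z.1, e2 * z.2.1, e3 * z.2.2) := rfl

theorem tendsto_root (N : ℕ) (hN : 0 < N) :
    Tendsto (fun x : ℝ => x ^ ((N:ℝ)⁻¹)) (𝓝[>] 0) (𝓝[>] 0) := by
  refine tendsto_nhdsWithin_iff.2 ⟨?_, ?_⟩
  · have : ContinuousAt (fun x : ℝ => x ^ ((N:ℝ)⁻¹)) 0 :=
      Real.continuousAt_rpow_const _ _ (Or.inr (by positivity))
    have h := this.tendsto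
    rw [Real.zero_rpow (by positivity)] at h
    exact h.mono_left nhdsWithin_le_nhds
  · filter_upwards [self_mem_nhdsWithin] with x hx
    exact Real.rpow_pos_of_pos hx _

/-- approximation with derivatives -/
theorem leaf_approx (S : ℝ × ℝ → ℝ) (ηc : ℝ) (hη : 0 < ηc) (N : ℕ) (hN : 0 < N) (μ δ A β : ℕ)
    (hA : β * μ ≤ A) (κ : ℝ → ℝ)
    (σ : ℝ) (c : ℝ)
    (U : ℝ × ℝ × ℝ → ℝ) (hU : AnalyticAt ℝ U 0) (hU0 : U 0 ≠ 0) (r : ℝ) (hr : 0 < r)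
    (hS : ∀ t v, 0 < t → t < r → 0 < v → v < r → c * t ^ δ / v < r →
      S (t ^ N, t ^ N * κ t + σ * (t ^ μ * v)) = t ^ A * v ^ β * U (t, v, c * t ^ δ / v)) :
    ∃ ρ > 0, ∀ x y : ℝ, 0 < x → 0 < y → x ^ ((N:ℝ)⁻¹) < ρ → y / (x ^ ((N:ℝ)⁻¹)) ^ μ < ρ →
      |c * (x ^ ((N:ℝ)⁻¹)) ^ δ / (y / (x ^ ((N:ℝ)⁻¹)) ^ μ)| < ρ → ∀ l m : ℕ,
      (l:ℝ) ≤ ((A:ℝ) - β * μ) / N → m ≤ β →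
      |pderiv2 l m (fun q => S (q.1, σ * q.2 + q.1 * κ (q.1 ^ ((N:ℝ)⁻¹)))) (x, y) -
        descProd (((A:ℝ) - β * μ) / N) l * descProd (β:ℝ) m * U 0 *
          x ^ (((A:ℝ) - β * μ) / N - l) * y ^ ((β:ℝ) - m)| <
        ηc * |U 0| * x ^ (((A:ℝ) - β * μ) / N - l) * y ^ ((β:ℝ) - m) := by
  obtain ⟨r1, hr1, hUa⟩ := hU.exists_ball_analyticOnNhd
  set α : ℝ := ((A:ℝ) - β * μ) / N with hα
  set r0 := min r r1 with hr0
  have hr0p : 0 < r0 := lt_min hr hr1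
  set Γ : ℝ × ℝ → ℝ × ℝ × ℝ := fun p => (p.1 ^ ((N:ℝ)⁻¹), p.2 * p.1 ^ (-((μ:ℝ)/N)),
    c * p.1 ^ (((δ+μ:ℕ):ℝ)/N) * p.2⁻¹) with hΓ
  set V := ball (0:ℝ×ℝ×ℝ) r0 with hV
  set Q : Set (ℝ × ℝ) := {p | 0 < p.1 ∧ 0 < p.2} with hQ
  have hQo : IsOpen Q := (isOpen_lt continuous_const continuous_fst).inter
    (isOpen_lt continuous_const continuous_snd)
  have hΓc : ContinuousOn Γ Q := by
    intro p hp
    refine ContinuousAt.continuousWithinAt ?_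
    have h1 := hp.1.ne'
    have h2 := hp.2.ne'
    have hc1 : ∀ e : ℝ, ContinuousAt (fun p : ℝ × ℝ => p.1 ^ e) p := fun e =>
      ContinuousAt.rpow_const continuousAt_fst (Or.inl h1)
    exact (hc1 _).prodMk ((continuousAt_snd.mul (hc1 _)).prodMk
      ((continuousAt_const.mul (hc1 _)).mul (continuousAt_snd.inv₀ h2)))
  set Ω := Q ∩ Γ ⁻¹' V with hΩ
  have hΩo : IsOpen Ω := hΓc.isOpen_inter_preimage hQo isOpen_ball
  -- values of Γ
  have hΓv : ∀ x y : ℝ, 0 < x → 0 < y → Γ (x, y) = (x ^ ((N:ℝ)⁻¹), y / (x ^ ((N:ℝ)⁻¹)) ^ μ,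
      c * (x ^ ((N:ℝ)⁻¹)) ^ δ / (y / (x ^ ((N:ℝ)⁻¹)) ^ μ)) := by
    intro x y hx hy
    have ht : 0 < x ^ ((N:ℝ)⁻¹) := Real.rpow_pos_of_pos hx _
    simp only [hΓ]
    rw [Real.rpow_neg hx.le, root_pow' N μ x hx.le, root_pow' N (δ+μ) x hx.le]
    refine Prod.ext rfl (Prod.ext ?_ ?_)
    · simp [div_eq_mul_inv]
    · simp only [pow_add]; field_simp
  have key := fun l m => leaf_deriv Ω hΩo (fun p hp => hp.1) Γ
    (GamA ((N:ℝ)⁻¹) (-((μ:ℝ)/N)) (((δ+μ:ℕ):ℝ)/N)) (GamA 0 1 (-1)) (by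
      rintro p ⟨⟨h1, h2⟩, h3⟩
      have e1 := hasDerivAt_rpow_inv ((N:ℝ)⁻¹) p.1 h1
      have e2 := (hasDerivAt_rpow_inv (-((μ:ℝ)/N)) p.1 h1).const_mul p.2
      have e3 := ((hasDerivAt_rpow_inv (((δ+μ:ℕ):ℝ)/N) p.1 h1).const_mul c).mul_const p.2⁻¹
      refine (e1.prodMk (e2.prodMk e3)).congr_deriv ?_
      simp only [GamA_apply, hΓ, smul_eq_mul, Prod.smul_mk]
      refine Prod.ext rfl (Prod.ext ?_ ?_)
      · simp only []; ring
      · simp only []; ring) (by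
      rintro p ⟨⟨h1, h2⟩, h3⟩
      have e1 := hasDerivAt_const p.2 (p.1 ^ ((N:ℝ)⁻¹))
      have e2 := (hasDerivAt_id p.2).mul_const (p.1 ^ (-((μ:ℝ)/N)))
      have e3 := (hasDerivAt_inv h2.ne').const_mul (c * p.1 ^ (((δ+μ:ℕ):ℝ)/N))
      refine (e1.prodMk (e2.prodMk e3)).congr_deriv ?_
      simp only [GamA_apply, hΓ, smul_eq_mul, Prod.smul_mk]
      refine Prod.ext ?_ (Prod.ext ?_ ?_)
      · simp
      · simp only []; field_simp
      · simp only []; field_simp)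
    V (fun p hp => hp.2) U (hUa.mono (ball_subset_ball (min_le_right _ _))) α (β:ℝ)
    (fun q => S (q.1, σ * q.2 + q.1 * κ (q.1 ^ ((N:ℝ)⁻¹)))) (by
      rintro ⟨x, y⟩ ⟨⟨h1, h2⟩, h3⟩
      simp only at h1 h2
      have ht : 0 < x ^ ((N:ℝ)⁻¹) := Real.rpow_pos_of_pos h1 _
      have h3' : Γ (x, y) ∈ V := h3
      rw [hΓv x y h1 h2] at h3' ⊢
      have hrp := root_pow N hN x h1.le
      have hxe : x ^ α = (x ^ ((N:ℝ)⁻¹)) ^ (A - β * μ) := by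
        rw [← root_pow' N (A - β*μ) x h1.le, hα, Nat.cast_sub hA]; push_cast; rfl
      simp only [hxe, Real.rpow_natCast]
      generalize x ^ ((N:ℝ)⁻¹) = t at *
      subst hrp
      rw [hV, mem_ball_zero_iff, Prod.norm_def, Prod.norm_def, max_lt_iff, max_lt_iff] at h3'
      simp only [Real.norm_eq_abs, hr0, lt_min_iff] at h3'
      have := hS t (y / t ^ μ) ht ((le_abs_self _).trans_lt h3'.1.1) (by positivity)
        ((le_abs_self _).trans_lt h3'.2.1.1) ((le_abs_self _).trans_lt h3'.2.2.1)
      rw [mul_div_cancel₀ y (by positivity : t ^ μ ≠ 0)] at this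
      rw [add_comm, this, div_pow]
      have : t ^ A = t ^ (A - β * μ) * (t ^ μ) ^ β := by
        rw [← pow_mul, ← pow_add]; congr 1; rw [mul_comm μ β]; omega
      rw [this]; field_simp) l m
  choose W hWa hW0 hWp using key
  have hev : ∀ᶠ z in 𝓝 (0:ℝ×ℝ×ℝ), ∀ l ∈ Finset.range (⌊α⌋₊ + 1), ∀ m ∈ Finset.range (β + 1),
      |W l m z - W l m 0| < ηc * |U 0| := by
    refine (Finset.eventually_all _).2 fun l _ => (Finset.eventually_all _).2 fun m _ => ?_
    have hc := (hWa l m 0 (mem_ball_self hr0p)).continuousAt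
    have := Metric.continuousAt_iff'.1 hc (ηc * |U 0|) (by positivity)
    simpa [Real.dist_eq] using this
  obtain ⟨r2, hr2, h2⟩ := Metric.eventually_nhds_iff_ball.1 hev
  refine ⟨min r0 r2, lt_min hr0p hr2, ?_⟩
  intro x y hx hy b1 b2 b3 l m hl hm
  have ht : 0 < x ^ ((N:ℝ)⁻¹) := Real.rpow_pos_of_pos hx _
  have hb : ‖Γ (x, y)‖ < min r0 r2 := by
    rw [hΓv x y hx hy, Prod.norm_def, Prod.norm_def, max_lt_iff, max_lt_iff]
    refine ⟨?_, ?_, b3⟩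
    · rwa [Real.norm_of_nonneg ht.le]
    · rwa [Real.norm_of_nonneg (by positivity)]
  have hmem : (x, y) ∈ Ω := ⟨⟨hx, hy⟩, mem_ball_zero_iff.2 (hb.trans_le (min_le_left _ _))⟩
  have h3 := h2 (Γ (x, y)) (mem_ball_zero_iff.2 (hb.trans_le (min_le_right _ _))) l
    (Finset.mem_range.2 (Nat.lt_succ_of_le (Nat.le_floor hl))) m (Finset.mem_range.2 (by omega))
  rw [hWp l m _ hmem]
  rw [hW0] at h3
  have px : 0 < x ^ (α - l) := Real.rpow_pos_of_pos hx _
  have py : 0 < y ^ ((β:ℝ) - m) := Real.rpow_pos_of_pos hy _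
  have e : x ^ (α - l) * y ^ ((β:ℝ) - m) * W l m (Γ (x, y)) -
      descProd α l * descProd β m * U 0 * x ^ (α - l) * y ^ ((β:ℝ) - m) =
      (W l m (Γ (x, y)) - descProd α l * descProd β m * U 0) * (x ^ (α - l) * y ^ ((β:ℝ) - m)) := by ring
  simp only []
  rw [e, abs_mul, abs_of_pos (mul_pos px py), mul_assoc (ηc * |U 0|)]
  exact mul_lt_mul_of_pos_right h3 (mul_pos px py)

theorem leaf_good (S : ℝ × ℝ → ℝ) (ηc : ℝ) (hη : 0 < ηc) (N : ℕ) (hN : 0 < N) (μ δ A β : ℕ)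
    (hNμ : N ≤ μ) (hδ : 0 < δ)
    (hA : β * μ ≤ A) (κ : ℝ → ℝ) (hκ : AnalyticAt ℝ κ 0)
    (σ : ℝ) (hσ : σ = 1 ∨ σ = -1) (c : ℝ) (hc : c = 0 ∨ c = 1) (hcβ : β = 0 → c = 0)
    (U : ℝ × ℝ × ℝ → ℝ) (hU : AnalyticAt ℝ U 0) (hU0 : U 0 ≠ 0) (r : ℝ) (hr : 0 < r)
    (hS : ∀ t v, 0 < t → t < r → 0 < v → v < r → c * t ^ δ / v < r →
      S (t ^ N, t ^ N * κ t + σ * (t ^ μ * v)) = t ^ A * v ^ β * U (t, v, c * t ^ δ / v))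
    (ε1 : ℝ) (hε1 : 0 < ε1) :
    ∃ ε > 0, ε ≤ ε1 ∧ ∃ C > 0, Good S ηc N {p : ℝ × ℝ | ∃ t v : ℝ, 0 < t ∧ c * C * t ^ δ < v ∧
      v < ε ∧ p = (t ^ N, t ^ N * κ t + σ * (t ^ μ * v))} := by
  obtain ⟨ρ, hρ, happ⟩ := leaf_approx S ηc hη N hN μ δ A β hA κ σ c U hU hU0 r hr hS
  obtain ⟨rκ, hrκ, hκa⟩ := hκ.exists_ball_analyticOnNhd
  have hc0 : 0 ≤ c := by rcases hc with h | h <;> simp [h]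
  set α : ℝ := ((A:ℝ) - β * μ) / N with hα
  refine ⟨min ε1 ρ, lt_min hε1 hρ, min_le_left _ _, 2 / ρ, by positivity, ?_⟩
  set ε := min ε1 ρ with hε
  have hε0 : 0 < ε := lt_min hε1 hρ
  set C := 2 / ρ with hC
  have hC0 : 0 < C := by positivity
  have hNr : (0:ℝ) < N := by exact_mod_cast hN
  have ev1 : ∀ᶠ a in 𝓝[>] (0:ℝ), a ^ ((N:ℝ)⁻¹) < min ρ rκ := by
    have := (tendsto_root N hN).mono_right nhdsWithin_le_nhds
    exact this.eventually (gt_mem_nhds (lt_min hρ hrκ))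
  unfold Good
  filter_upwards [ev1, self_mem_nhdsWithin] with a ha1 ha0
  have ha0' : 0 < a := ha0
  set k : ℝ → ℝ := fun x => x * κ (x ^ ((N:ℝ)⁻¹)) with hk
  set g : ℝ → ℝ := fun x => (c * C) * (x ^ ((N:ℝ)⁻¹)) ^ (δ + μ) with hg
  set G : ℝ → ℝ := fun x => ε * (x ^ ((N:ℝ)⁻¹)) ^ μ with hG
  have hsl : ∀ p ∈ sliverSet a g G, 0 < p.1 ∧ 0 < p.2 ∧ ∀ l m : ℕ, (l:ℝ) ≤ α → m ≤ β →
      |pderiv2 l m (fun q => S (q.1, σ * q.2 + k q.1)) p -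
        descProd α l * descProd (β:ℝ) m * U 0 *
          p.1 ^ (α - l) * p.2 ^ ((β:ℝ) - m)| <
        ηc * |U 0| * p.1 ^ (α - l) * p.2 ^ ((β:ℝ) - m) := by
    rintro ⟨x, y⟩ ⟨h1, h2, h3, h4⟩
    simp only [hg, hG] at h1 h2 h3 h4
    have ht : 0 < x ^ ((N:ℝ)⁻¹) := Real.rpow_pos_of_pos h1 _
    have hta : x ^ ((N:ℝ)⁻¹) < a ^ ((N:ℝ)⁻¹) := Real.rpow_lt_rpow h1.le h2 (by positivity)
    have hy : 0 < y := lt_of_le_of_lt (by positivity) h3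
    refine ⟨h1, hy, fun l m hl hm => happ x y h1 hy ?_ ?_ ?_ l m hl hm⟩
    · exact hta.trans (ha1.trans_le (min_le_left _ _))
    · rw [div_lt_iff₀ (by positivity)]
      exact h4.trans_le (by gcongr; exact min_le_right _ _)
    · generalize x ^ ((N:ℝ)⁻¹) = t at *
      rw [abs_of_nonneg (by positivity), div_lt_iff₀ (by positivity), mul_div_assoc', lt_div_iff₀ (by positivity)]
      rw [mul_assoc c, pow_add] at h3
      rcases hc with h | h
      · simp [h]; positivity
      · rw [h] at h3 ⊢
        simp only [one_mul, hC] at h3 ⊢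
        rw [div_mul_eq_mul_div, div_lt_iff₀ hρ] at h3
        have : 0 < t ^ δ * t ^ μ := by positivity
        linarith
  refine ⟨k, g, G, σ, κ 0, 1, ε, (μ:ℝ)/N, α, U 0, β, hσ, ?_, ?_, le_rfl, puiseuxOn_pow _ _ _ _,
    puiseuxOn_pow _ _ _ _, leading_pow _ _ _, hε0, ?_, ?_, ?_, hU0, ?_, ?_⟩
  · refine ⟨fun t => t ^ N * κ t, ball 0 rκ, isOpen_ball, ?_, ?_, ?_⟩
    · intro t ht
      rw [mem_ball_zero_iff, Real.norm_of_nonneg ht.1]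
      exact ht.2.trans_lt (ha1.trans_le (min_le_right _ _))
    · intro t ht
      exact (analyticAt_id.pow N).mul (hκa t ht)
    · intro x hx
      simp only [hk, root_pow N hN x hx.1]
  · have h1 : Tendsto (fun x : ℝ => κ (x ^ ((N:ℝ)⁻¹))) (𝓝[>] 0) (𝓝 (κ 0)) :=
      hκ.continuousAt.tendsto.comp ((tendsto_root N hN).mono_right nhdsWithin_le_nhds)
    refine h1.congr' ?_
    filter_upwards [self_mem_nhdsWithin] with x hx
    have : x ≠ 0 := (ne_of_gt hx)
    simp only [hk, Real.rpow_one]; field_simp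
  · rw [le_div_iff₀ hNr, one_mul]; exact_mod_cast hNμ
  · exact ⟨((A:ℚ) - β * μ) / N, by push_cast; rfl⟩
  · rw [hα]
    refine div_nonneg ?_ hNr.le
    rw [sub_nonneg]; exact_mod_cast hA
  · ext ⟨X, Y⟩
    constructor
    · rintro ⟨⟨t, v, ht, hv1, hv2, h⟩, hX⟩
      simp only [Prod.mk.injEq] at h
      obtain ⟨rfl, rfl⟩ := h
      refine ⟨(t ^ N, t ^ μ * v), ⟨by positivity, hX, ?_, ?_⟩, ?_⟩
      · simp only [hg, pow_root N hN t ht.le, pow_add]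
        calc c * C * (t ^ δ * t ^ μ) = t ^ μ * (c * C * t ^ δ) := by ring
          _ < t ^ μ * v := by gcongr
      · simp only [hG, pow_root N hN t ht.le]
        rw [mul_comm]; gcongr
      · simp only [hk, pow_root N hN t ht.le, Prod.mk.injEq, true_and]; ring
    · rintro ⟨⟨x, y⟩, ⟨h1, h2, h3, h4⟩, h⟩
      simp only [Prod.mk.injEq] at h h1 h2 h3 h4
      obtain ⟨rfl, rfl⟩ := h
      simp only [hg, hG] at h3 h4
      have ht : 0 < x ^ ((N:ℝ)⁻¹) := Real.rpow_pos_of_pos h1 _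
      refine ⟨⟨x ^ ((N:ℝ)⁻¹), y / (x ^ ((N:ℝ)⁻¹)) ^ μ, ht, ?_, ?_, ?_⟩, h2⟩
      · rw [lt_div_iff₀ (by positivity), mul_assoc, ← pow_add]; exact h3
      · rw [div_lt_iff₀ (by positivity)]; exact h4
      · rw [root_pow N hN x h1.le, mul_div_cancel₀ y (by positivity)]
        simp only [hk]; rw [add_comm]
  · by_cases hβ : β = 0
    · left
      refine ⟨hβ, fun x => by simp [hg, hcβ hβ], fun x hx => ?_, ?_⟩
      · simp only [hG]; rw [root_pow' N μ x hx.1.le]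
      · intro p hp l hl
        obtain ⟨h1, h2, h3⟩ := hsl p hp
        have := h3 l 0 hl (Nat.zero_le _)
        simp only [hβ, Nat.cast_zero, sub_zero, Real.rpow_zero, mul_one, descProd, Finset.range_zero,
          Finset.prod_empty] at this ⊢
        rw [mul_comm (U 0)]; exact this
    · right
      refine ⟨Nat.pos_of_ne_zero hβ, ?_, ?_⟩
      · rcases hc with h | h
        · left; intro x; simp [hg, h]
        · right
          refine ⟨c * C, ((δ+μ:ℕ):ℝ)/N, by rw [h]; positivity, ?_, leading_pow _ _ _⟩
          gcongr; omega
      · intro p hp l hl m hm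
        exact ((hsl p hp).2.2 l m hl hm).le

theorem puiseuxOn_mul {N q : ℕ} (hN : 0 < N) (hq : 0 < q) {a : ℝ} (ha : 0 ≤ a) {k : ℝ → ℝ}
    (h : PuiseuxOn N a k) : PuiseuxOn (N * q) a k := by
  obtain ⟨k', I, hI, hIs, hk, hx⟩ := h
  have hroot : ∀ x : ℝ, 0 ≤ x → (x ^ (((N * q : ℕ) : ℝ)⁻¹)) ^ q = x ^ ((N:ℝ)⁻¹) := by
    intro x hx
    rw [← Real.rpow_mul_natCast hx]
    congr 1
    push_cast
    have : (q:ℝ) ≠ 0 := by exact_mod_cast hq.ne'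
    have : (N:ℝ) ≠ 0 := by exact_mod_cast hN.ne'
    field_simp
  refine ⟨fun t => k' (t ^ q), (fun t => t ^ q) ⁻¹' I, hI.preimage (by fun_prop), ?_, ?_, ?_⟩
  · rintro t ⟨h1, h2⟩
    refine hIs ⟨by positivity, ?_⟩
    rw [← hroot a ha]
    exact pow_le_pow_left₀ h1 h2 q
  · intro t ht
    exact AnalyticAt.fun_comp (f := fun t : ℝ => t ^ q) (hk (t ^ q) ht) (analyticAt_id.pow q)
  · intro x hxa
    rw [hx x hxa, ← hroot x hxa.1]

theorem blk_mul {S : ℝ × ℝ → ℝ} {ηc : ℝ} {N q : ℕ} (hN : 0 < N) (hq : 0 < q) {a : ℝ} (ha : 0 ≤ a)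
    {D : Set (ℝ × ℝ)} (h : Blk S ηc N a D) : Blk S ηc (N * q) a D := by
  obtain ⟨k, g, G, σ, li, si, Hi, Mi, αi, di, βi, h1, h2, h3, h4, h5, h6, h7⟩ := h
  exact ⟨k, g, G, σ, li, si, Hi, Mi, αi, di, βi, h1, puiseuxOn_mul hN hq ha h2, h3, h4,
    puiseuxOn_mul hN hq ha h5, puiseuxOn_mul hN hq ha h6, h7⟩

theorem good_mul {S : ℝ × ℝ → ℝ} {ηc : ℝ} {N q : ℕ} (hN : 0 < N) (hq : 0 < q)
    {D : Set (ℝ × ℝ)} (h : Good S ηc N D) : Good S ηc (N * q) D := by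
  filter_upwards [h, self_mem_nhdsWithin] with a ha h0
  exact blk_mul hN hq (le_of_lt h0) ha

def Cov (S : ℝ × ℝ → ℝ) (ηc : ℝ) (R R' : Set (ℝ × ℝ)) : Prop :=
  ∃ N : ℕ, 0 < N ∧ ∃ L : Finset (Set (ℝ × ℝ)), (∀ D ∈ L, Good S ηc N D) ∧
    ∀ᶠ a in 𝓝[>] (0:ℝ), (∀ D ∈ L, D ∩ {p | p.1 < a} ⊆ R) ∧
      ∀ p ∈ R', 0 < p.1 → p.1 < a → p ∈ ⋃ D ∈ L, closure (D ∩ {p : ℝ × ℝ | p.1 < a})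

theorem Cov.empty {S : ℝ × ℝ → ℝ} {ηc : ℝ} {R : Set (ℝ × ℝ)} : Cov S ηc R ∅ :=
  ⟨1, one_pos, ∅, by simp, by simp⟩

theorem Cov.union {S : ℝ × ℝ → ℝ} {ηc : ℝ} {R R1 R2 : Set (ℝ × ℝ)} (h1 : Cov S ηc R R1)
    (h2 : Cov S ηc R R2) : Cov S ηc R (R1 ∪ R2) := by
  classical
  obtain ⟨N1, hN1, L1, g1, e1⟩ := h1
  obtain ⟨N2, hN2, L2, g2, e2⟩ := h2
  refine ⟨N1 * N2, by positivity, L1 ∪ L2, ?_, ?_⟩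
  · intro D hD
    rcases Finset.mem_union.1 hD with h | h
    · exact good_mul hN1 hN2 (g1 D h)
    · rw [mul_comm]; exact good_mul hN2 hN1 (g2 D h)
  · filter_upwards [e1, e2] with a ha1 ha2
    refine ⟨?_, ?_⟩
    · intro D hD
      rcases Finset.mem_union.1 hD with h | h
      · exact ha1.1 D h
      · exact ha2.1 D h
    · intro p hp h0 hpa
      rw [mem_iUnion₂]
      rcases hp with hp | hp
      · obtain ⟨D, hD, h⟩ := mem_iUnion₂.1 (ha1.2 p hp h0 hpa)
        exact ⟨D, Finset.mem_union_left _ hD, h⟩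
      · obtain ⟨D, hD, h⟩ := mem_iUnion₂.1 (ha2.2 p hp h0 hpa)
        exact ⟨D, Finset.mem_union_right _ hD, h⟩

theorem Cov.mono {S : ℝ × ℝ → ℝ} {ηc : ℝ} {R R1 Q Q1 : Set (ℝ × ℝ)} (h : Cov S ηc R Q)
    (hR : ∀ᶠ a in 𝓝[>] (0:ℝ), ∀ p ∈ R, p.1 < a → p ∈ R1)
    (hQ : ∀ᶠ a in 𝓝[>] (0:ℝ), ∀ p ∈ Q1, 0 < p.1 → p.1 < a → p ∈ Q) : Cov S ηc R1 Q1 := by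
  obtain ⟨N, hN, L, g, e⟩ := h
  refine ⟨N, hN, L, g, ?_⟩
  filter_upwards [e, hR, hQ] with a ha h1 h2
  exact ⟨fun D hD p hp => h1 p (ha.1 D hD hp) hp.2, fun p hp h0 hpa => ha.2 p (h2 p hp h0 hpa) h0 hpa⟩

theorem Cov.single {S : ℝ × ℝ → ℝ} {ηc : ℝ} {N : ℕ} (hN : 0 < N) {R D : Set (ℝ × ℝ)}
    (h : Good S ηc N D) (hD : ∀ᶠ a in 𝓝[>] (0:ℝ), ∀ p ∈ D, p.1 < a → p ∈ R) : Cov S ηc R D := by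
  classical
  refine ⟨N, hN, {D}, by simpa using h, ?_⟩
  filter_upwards [hD] with a ha
  refine ⟨fun D' hD' p hp => ha p ((Finset.mem_singleton.1 hD') ▸ hp.1) hp.2, ?_⟩
  intro p hp h0 hpa
  rw [mem_iUnion₂]
  exact ⟨D, by simp, subset_closure ⟨hp, hpa⟩⟩

theorem Cov.biUnion {S : ℝ × ℝ → ℝ} {ηc : ℝ} {ι : Type*} (s : Finset ι) {R : Set (ℝ × ℝ)}
    {Q : ι → Set (ℝ × ℝ)} (h : ∀ i ∈ s, Cov S ηc R (Q i)) : Cov S ηc R (⋃ i ∈ s, Q i) := by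
  classical
  induction s using Finset.induction_on with
  | empty => simpa using Cov.empty
  | insert i s hi ih =>
    rw [Finset.set_biUnion_insert]
    exact (h i (by simp)).union (ih fun j hj => h j (by simp [hj]))

theorem Cov.absorb {S : ℝ × ℝ → ℝ} {ηc : ℝ} {R Q Q1 : Set (ℝ × ℝ)} (h : Cov S ηc R Q)
    (hQ : ∀ p ∈ Q1, 0 < p.1 → p ∈ closure (Q ∩ {q | q.1 = p.1})) : Cov S ηc R Q1 := by
  obtain ⟨N, hN, L, g, e⟩ := h
  refine ⟨N, hN, L, g, ?_⟩
  filter_upwards [e] with a ha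
  refine ⟨ha.1, fun p hp h0 hpa => ?_⟩
  have hcl : IsClosed (⋃ D ∈ L, closure (D ∩ {p : ℝ × ℝ | p.1 < a})) :=
    L.finite_toSet.isClosed_biUnion fun D _ => isClosed_closure
  refine closure_minimal ?_ hcl (hQ p hp h0)
  rintro q ⟨hq, hq1⟩
  have hq1' : q.1 = p.1 := hq1
  exact ha.2 q hq (by rw [hq1']; exact h0) (by rw [hq1']; exact hpa)

def RegI (N μ : ℕ) (κ : ℝ → ℝ) (I : Set ℝ) : Set (ℝ × ℝ) :=
  {p | ∃ t w : ℝ, 0 < t ∧ w ∈ I ∧ p = (t ^ N, t ^ N * κ t + t ^ μ * w)}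

theorem ev_small (N : ℕ) (hN : 0 < N) (P : ℝ → Prop) (hP : ∀ᶠ t in 𝓝 (0:ℝ), P t) :
    ∀ᶠ a in 𝓝[>] (0:ℝ), ∀ t : ℝ, 0 < t → t ^ N < a → P t := by
  obtain ⟨ρ, hρ, h⟩ := Metric.eventually_nhds_iff.1 hP
  have : ∀ᶠ a in 𝓝[>] (0:ℝ), a < ρ ^ N := nhdsWithin_le_nhds (gt_mem_nhds (by positivity))
  filter_upwards [this] with a ha t ht hta
  apply h
  rw [Real.dist_eq, sub_zero, abs_of_pos ht]
  exact lt_of_pow_lt_pow_left₀ N hρ.le (hta.trans ha)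

theorem RegI_mono {N μ : ℕ} {κ : ℝ → ℝ} {I J : Set ℝ} (h : I ⊆ J) : RegI N μ κ I ⊆ RegI N μ κ J := by
  rintro p ⟨t, w, ht, hw, rfl⟩; exact ⟨t, w, ht, h hw, rfl⟩

theorem cov_compact {S : ℝ × ℝ → ℝ} {ηc : ℝ} {R : Set (ℝ × ℝ)} {N μ : ℕ} {κ : ℝ → ℝ} {K : Set ℝ}
    (hK : IsCompact K) (h : ∀ w ∈ K, ∃ V ∈ 𝓝[K] w, Cov S ηc R (RegI N μ κ V)) :
    Cov S ηc R (RegI N μ κ K) := by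
  refine hK.induction_on (p := fun V => Cov S ηc R (RegI N μ κ V)) ?_ ?_ ?_ h
  · have : RegI N μ κ ∅ = ∅ := by ext p; simp [RegI]
    rw [this]; exact Cov.empty
  · intro s t hst ht
    exact ht.mono (by simp +contextual) (.of_forall fun a p hp _ _ => RegI_mono hst hp)
  · intro s t hs ht
    refine (hs.union ht).mono (by simp +contextual) (.of_forall fun a p hp _ _ => ?_)
    obtain ⟨t, w, h0, hw, rfl⟩ := hp
    rcases hw with hw | hw
    · exact Or.inl ⟨t, w, h0, hw, rfl⟩
    · exact Or.inr ⟨t, w, h0, hw, rfl⟩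

theorem shift_id {N μ : ℕ} (h : N ≤ μ) (t k f w : ℝ) :
    t ^ N * (k + t ^ (μ - N) * f) + t ^ μ * w = t ^ N * k + t ^ μ * (f + w) := by
  have : t ^ μ = t ^ N * t ^ (μ - N) := by rw [← pow_add]; congr 1; omega
  rw [this]; ring

/-- change of centre by an analytic function -/
theorem cov_shift {S : ℝ × ℝ → ℝ} {ηc : ℝ} {N μ : ℕ} (hN : 0 < N) (hNμ : N ≤ μ) {κ φ : ℝ → ℝ}
    (hφ : AnalyticAt ℝ φ 0) (h0 : φ 0 = 0)
    (h : ∀ ε > 0, ∃ ε' > 0, Cov S ηc (RegI N μ (fun t => κ t + t ^ (μ - N) * φ t) (ball 0 ε))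
      (RegI N μ (fun t => κ t + t ^ (μ - N) * φ t) (ball 0 ε'))) :
    ∀ ε > 0, ∃ ε' > 0, Cov S ηc (RegI N μ κ (ball 0 ε)) (RegI N μ κ (ball 0 ε')) := by
  intro ε hε
  obtain ⟨ε', hε', hc⟩ := h (ε / 2) (by positivity)
  have hsm : ∀ δ > 0, ∀ᶠ t in 𝓝 (0:ℝ), |φ t| < δ := by
    intro δ hδ
    have := hφ.continuousAt.tendsto
    rw [h0] at this
    simpa using this.eventually (ball_mem_nhds 0 hδ)
  refine ⟨ε' / 2, by positivity, hc.mono ?_ ?_⟩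
  · filter_upwards [ev_small N hN _ (hsm (ε/2) (by positivity))] with a ha
    rintro p ⟨t, w, ht, hw, rfl⟩ hp
    have := ha t ht hp
    refine ⟨t, φ t + w, ht, ?_, by rw [shift_id hNμ]⟩
    rw [mem_ball_zero_iff, Real.norm_eq_abs] at hw ⊢
    exact (abs_add_le _ _).trans_lt (by linarith)
  · filter_upwards [ev_small N hN _ (hsm (ε'/2) (by positivity))] with a ha
    rintro p ⟨t, w, ht, hw, rfl⟩ _ hp
    have := ha t ht hp
    refine ⟨t, w - φ t, ht, ?_, by rw [shift_id hNμ]; simp⟩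
    rw [mem_ball_zero_iff, Real.norm_eq_abs] at hw ⊢
    exact (abs_sub _ _).trans_lt (by linarith)

theorem leaf_half (S : ℝ × ℝ → ℝ) (ηc : ℝ) (hη : 0 < ηc) (N : ℕ) (hN : 0 < N) (μ A β : ℕ)
    (hNμ : N ≤ μ) (hA : β * μ ≤ A) (κ : ℝ → ℝ) (hκ : AnalyticAt ℝ κ 0)
    (u : ℝ × ℝ → ℝ) (hu : AnalyticAt ℝ u 0) (hu0 : u 0 ≠ 0) (r : ℝ) (hr : 0 < r)
    (hS : ∀ t w, 0 < t → t < r → |w| < r →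
      S (t ^ N, t ^ N * κ t + t ^ μ * w) = t ^ A * (w ^ β * u (t, w)))
    (σ : ℝ) (hσ : σ = 1 ∨ σ = -1) (ε : ℝ) (hε : 0 < ε) :
    ∃ ε' > 0, Cov S ηc (RegI N μ κ {w | 0 < σ * w ∧ σ * w < ε})
      (RegI N μ κ {w | 0 ≤ σ * w ∧ σ * w < ε'}) := by
  have hσ2 : σ * σ = 1 := by rcases hσ with h | h <;> simp [h]
  have hσa : |σ| = 1 := by rcases hσ with h | h <;> simp [h]
  have hσ0 : σ ≠ 0 := by rcases hσ with h | h <;> simp [h]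
  obtain ⟨ε', hε', hle, C, hC, hg⟩ := leaf_good S ηc hη N hN μ 1 A β hNμ one_pos hA κ hκ σ hσ 0
    (Or.inl rfl) (fun _ => rfl) (fun z => σ ^ β * u (z.1, σ * z.2.1))
    (by
      refine analyticAt_const.mul (hu.fun_comp_of_eq ((by fun_prop : ContDiff ℝ ⊤ fun z : ℝ × ℝ × ℝ => (z.1, σ * z.2.1)).contDiffAt.analyticAt) (by simp)))
    (by simpa [hσ0] using (show u (0, 0) ≠ 0 from hu0)) r hr
    (by
      intro t v h1 h2 h3 h4 _
      have := hS t (σ * v) h1 h2 (by rw [abs_mul, hσa, one_mul, abs_of_pos h3]; exact h4)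
      rw [show σ * (t ^ μ * v) = t ^ μ * (σ * v) by ring, this]
      ring) ε hε
  refine ⟨ε', hε', ?_⟩
  have h1 := Cov.single (R := RegI N μ κ {w | 0 < σ * w ∧ σ * w < ε}) hN hg (by
    refine .of_forall fun a => ?_
    rintro p ⟨t, v, ht, hv, hv', rfl⟩ _
    refine ⟨t, σ * v, ht, ?_, by ring_nf⟩
    simp only [mem_ofPred_eq, ← mul_assoc, hσ2, one_mul]
    constructor <;> linarith)
  refine h1.absorb ?_
  rintro p ⟨t, w, ht, ⟨hw, hw'⟩, rfl⟩ _
  have hcont : Tendsto (fun s : ℝ => ((t ^ N, t ^ N * κ t + t ^ μ * (w + σ * s)) : ℝ × ℝ)) (𝓝[>] 0)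
      (𝓝 (t ^ N, t ^ N * κ t + t ^ μ * w)) := by
    have : Continuous (fun s : ℝ => ((t ^ N, t ^ N * κ t + t ^ μ * (w + σ * s)) : ℝ × ℝ)) := by fun_prop
    have h := this.tendsto 0
    simp only [mul_zero, add_zero] at h
    exact h.mono_left nhdsWithin_le_nhds
  refine mem_closure_of_tendsto hcont ?_
  have hlt : ∀ᶠ s in 𝓝[>] (0:ℝ), s < ε' - σ * w := nhdsWithin_le_nhds (gt_mem_nhds (by linarith))
  filter_upwards [hlt, self_mem_nhdsWithin] with s hs hs0
  have hs0' : 0 < s := hs0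
  refine ⟨⟨t, σ * w + s, ht, by simp; linarith, by linarith, ?_⟩, rfl⟩
  have : σ * (t ^ μ * (σ * w + s)) = t ^ μ * (σ * σ * w + σ * s) := by ring
  rw [this, hσ2, one_mul]

theorem leaf_both (S : ℝ × ℝ → ℝ) (ηc : ℝ) (hη : 0 < ηc) (N : ℕ) (hN : 0 < N) (μ A β : ℕ)
    (hNμ : N ≤ μ) (hA : β * μ ≤ A) (κ : ℝ → ℝ) (hκ : AnalyticAt ℝ κ 0)
    (u : ℝ × ℝ → ℝ) (hu : AnalyticAt ℝ u 0) (hu0 : u 0 ≠ 0) (r : ℝ) (hr : 0 < r)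
    (hS : ∀ t w, 0 < t → t < r → |w| < r →
      S (t ^ N, t ^ N * κ t + t ^ μ * w) = t ^ A * (w ^ β * u (t, w)))
    (ε : ℝ) (hε : 0 < ε) :
    ∃ ε' > 0, Cov S ηc (RegI N μ κ (ball 0 ε)) (RegI N μ κ (ball 0 ε')) := by
  obtain ⟨e1, he1, h1⟩ := leaf_half S ηc hη N hN μ A β hNμ hA κ hκ u hu hu0 r hr hS 1 (Or.inl rfl) ε hε
  obtain ⟨e2, he2, h2⟩ := leaf_half S ηc hη N hN μ A β hNμ hA κ hκ u hu hu0 r hr hS (-1) (Or.inr rfl) ε hε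
  have h1' := h1.mono (R1 := RegI N μ κ (ball 0 ε)) (Q1 := RegI N μ κ {w | 0 ≤ 1 * w ∧ 1 * w < e1})
    (.of_forall fun a p hp _ => RegI_mono (by
      intro w hw
      simp only [mem_ofPred_eq] at hw
      rw [mem_ball_zero_iff, Real.norm_eq_abs, abs_lt]; constructor <;> linarith) hp)
    (.of_forall fun a p hp _ _ => hp)
  have h2' := h2.mono (R1 := RegI N μ κ (ball 0 ε)) (Q1 := RegI N μ κ {w | 0 ≤ (-1) * w ∧ (-1) * w < e2})
    (.of_forall fun a p hp _ => RegI_mono (by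
      intro w hw
      simp only [mem_ofPred_eq] at hw
      rw [mem_ball_zero_iff, Real.norm_eq_abs, abs_lt]; constructor <;> linarith) hp)
    (.of_forall fun a p hp _ _ => hp)
  refine ⟨min e1 e2, lt_min he1 he2, (h1'.union h2').mono (.of_forall fun a p hp _ => hp)
    (.of_forall fun a p hp _ _ => ?_)⟩
  obtain ⟨t, w, ht, hw, rfl⟩ := hp
  rw [mem_ball_zero_iff, Real.norm_eq_abs, abs_lt, ← neg_lt, lt_min_iff, lt_min_iff] at hw
  rcases le_total 0 w with h | h
  · exact Or.inl ⟨t, w, ht, ⟨by linarith, by linarith⟩, rfl⟩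
  · exact Or.inr ⟨t, w, ht, ⟨by linarith, by linarith⟩, rfl⟩

theorem poly_order (Q : Polynomial ℝ) (n : ℕ) (hn : 0 < n) (hdeg : Q.natDegree = n)
    (h1 : Q.coeff (n - 1) = 0) (hne : ∃ j < n, Q.coeff j ≠ 0) (w0 : ℝ) :
    ∃ m < n, (Polynomial.derivative^[m] (Q.comp (Polynomial.X + Polynomial.C w0))).eval 0 ≠ 0 := by
  by_contra hcon
  push Not at hcon
  have hQ0 : Q ≠ 0 := by
    rintro rfl; obtain ⟨j, _, hj⟩ := hne; simp at hj
  have hc : ∀ m < n, (Polynomial.taylor w0 Q).coeff m = 0 := by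
    intro m hm
    have h := hcon m hm
    rw [← Polynomial.coeff_zero_eq_eval_zero, Polynomial.coeff_iterate_derivative] at h
    simp only [zero_add, Nat.descFactorial_self, nsmul_eq_mul, mul_eq_zero, Nat.cast_eq_zero] at h
    rcases h with h | h
    · exact absurd h (Nat.factorial_ne_zero m)
    · exact h
  have hP : Polynomial.taylor w0 Q = Polynomial.C ((Polynomial.taylor w0 Q).coeff n) * Polynomial.X ^ n := by
    ext m
    rw [Polynomial.coeff_C_mul, Polynomial.coeff_X_pow]
    rcases lt_trichotomy m n with h | h | h
    · simp [hc m h, h.ne]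
    · simp [h]
    · rw [Polynomial.coeff_eq_zero_of_natDegree_lt (by rw [Polynomial.natDegree_taylor, hdeg]; exact h)]
      simp [h.ne']
  set A := (Polynomial.taylor w0 Q).coeff n
  have hQ : Q = Polynomial.C A * (Polynomial.X - Polynomial.C w0) ^ n := by
    have := congrArg (Polynomial.taylor (-w0)) hP
    rw [Polynomial.taylor_taylor, neg_add_cancel, Polynomial.taylor_zero] at this
    rw [this]
    simp [Polynomial.taylor_apply, sub_eq_add_neg]
  have hA : A ≠ 0 := by
    intro h; rw [h] at hQ; simp at hQ; exact hQ0 hQ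
  have hco : Q.coeff (n - 1) = A * (-(n * w0)) := by
    rw [hQ, Polynomial.coeff_C_mul, sub_eq_add_neg, ← Polynomial.C_neg, Polynomial.coeff_X_add_C_pow]
    rw [show n - (n - 1) = 1 by omega, Nat.choose_symm (by omega : 1 ≤ n)]
    rw [pow_one, Nat.choose_one_right]; ring
  have hw0 : w0 = 0 := by
    rw [h1] at hco
    have hnr : (n:ℝ) ≠ 0 := by exact_mod_cast hn.ne'
    have := hco.symm
    simpa [hA, hnr] using this
  obtain ⟨j, hj, hjn⟩ := hne
  apply hjn
  rw [hQ, hw0]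
  simp [Polynomial.coeff_X_pow, hj.ne]

theorem newton (n : ℕ) (c : ℕ → ℝ → ℝ) (hc : ∀ j, AnalyticAt ℝ (c j) 0)
    (h0 : ∀ j < n, c j 0 = 0) (hne : ∃ j < n, ¬ ∀ᶠ t in 𝓝 (0:ℝ), c j t = 0) :
    ∃ p q : ℕ, 0 < p ∧ 0 < q ∧ ∃ ct : ℕ → ℝ → ℝ, (∀ j, AnalyticAt ℝ (ct j) 0) ∧
      (∀ j < n, ∀ᶠ τ in 𝓝 (0:ℝ), c j (τ ^ q) = τ ^ (p * (n - j)) * ct j τ) ∧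
      (∃ j < n, ct j 0 ≠ 0) ∧ (∀ j < n, (∀ᶠ t in 𝓝 (0:ℝ), c j t = 0) → ct j 0 = 0) := by
  classical
  have hfac : ∀ j, ∃ (e : ℕ) (g : ℝ → ℝ), AnalyticAt ℝ g 0 ∧
      ((¬ ∀ᶠ t in 𝓝 (0:ℝ), c j t = 0) → g 0 ≠ 0 ∧ ∀ᶠ t in 𝓝 (0:ℝ), c j t = t ^ e * g t) := by
    intro j
    by_cases hz : ∀ᶠ t in 𝓝 (0:ℝ), c j t = 0
    · exact ⟨0, fun _ => 0, analyticAt_const, fun h => absurd hz h⟩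
    · obtain ⟨e, g, hg, hg0, hev⟩ := (hc j).exists_eventuallyEq_pow_smul_nonzero_iff.2 hz
      exact ⟨e, g, hg, fun _ => ⟨hg0, by simpa using hev⟩⟩
  choose e g hga hg using hfac
  set s := (Finset.range n).filter (fun j => ¬ ∀ᶠ t in 𝓝 (0:ℝ), c j t = 0) with hs
  have hsne : s.Nonempty := by
    obtain ⟨j, hj, h⟩ := hne
    exact ⟨j, by simp only [hs, Finset.mem_filter, Finset.mem_range]; exact ⟨hj, h⟩⟩
  obtain ⟨J, hJ, hmin⟩ := s.exists_min_image (fun j => (e j : ℚ) / ((n - j : ℕ) : ℚ)) hsne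
  simp only [hs, Finset.mem_filter, Finset.mem_range] at hJ hmin
  have hJp : 0 < e J := by
    rcases Nat.eq_zero_or_pos (e J) with h | h
    · exfalso
      obtain ⟨h1, h2⟩ := hg J hJ.2
      have := h2.self_of_nhds
      rw [h0 J hJ.1, h] at this
      simp at this
      exact h1 this.symm
    · exact h
  have hle : ∀ j < n, (¬ ∀ᶠ t in 𝓝 (0:ℝ), c j t = 0) → e J * (n - j) ≤ (n - J) * e j := by
    intro j hj hz
    have h := hmin j ⟨hj, hz⟩
    have h1 : (0:ℚ) < ((n - J : ℕ) : ℚ) := by exact_mod_cast Nat.sub_pos_of_lt hJ.1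
    have h2 : (0:ℚ) < ((n - j : ℕ) : ℚ) := by exact_mod_cast Nat.sub_pos_of_lt hj
    rw [div_le_div_iff₀ h1 h2] at h
    have h' : e J * (n - j) ≤ e j * (n - J) := by exact_mod_cast h
    linarith [mul_comm (e j) (n - J)]
  have hq : 0 < n - J := Nat.sub_pos_of_lt hJ.1
  have htend : Tendsto (fun τ : ℝ => τ ^ (n - J)) (𝓝 0) (𝓝 0) := by
    have : Continuous (fun τ : ℝ => τ ^ (n - J)) := by fun_prop
    simpa [hq.ne'] using this.tendsto 0
  refine ⟨e J, n - J, hJp, hq, fun j => if (∀ᶠ t in 𝓝 (0:ℝ), c j t = 0) then fun _ => 0 else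
    fun τ => τ ^ ((n - J) * e j - e J * (n - j)) * g j (τ ^ (n - J)), ?_, ?_, ?_, ?_⟩
  · intro j
    by_cases hz : ∀ᶠ t in 𝓝 (0:ℝ), c j t = 0
    · simp only [hz, if_true]; exact analyticAt_const
    · simp only [hz, if_false]
      refine (analyticAt_id.pow _).mul ?_
      exact AnalyticAt.fun_comp_of_eq (hga j) (f := fun τ : ℝ => τ ^ (n - J)) (analyticAt_id.pow _) (by simp [hq.ne'])
  · intro j hj
    by_cases hz : ∀ᶠ t in 𝓝 (0:ℝ), c j t = 0
    · filter_upwards [htend.eventually hz] with τ hτ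
      simp only [hz, if_true, hτ, mul_zero]
    · filter_upwards [htend.eventually (hg j hz).2] with τ hτ
      simp only [hz, if_false, hτ, ← mul_assoc, ← pow_add, ← pow_mul]
      congr 2
      have := hle j hj hz
      omega
  · refine ⟨J, hJ.1, ?_⟩
    simp only [hJ.2, if_false]
    rw [mul_comm (e J)]
    simpa [hq.ne'] using (hg J hJ.2).1
  · intro j hj hz
    simp only [hz, if_true]

structure Node (S : ℝ × ℝ → ℝ) (N μ A n : ℕ) (κ : ℝ → ℝ) (F : ℝ × ℝ → ℝ) : Prop where
  hN : 0 < N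
  hNμ : N ≤ μ
  hA : n * μ ≤ A
  hκ : AnalyticAt ℝ κ 0
  hF : AnalyticAt ℝ F 0
  hS : ∃ r > 0, ∀ t w : ℝ, 0 < t → t < r → |w| < r →
    S (t ^ N, t ^ N * κ t + t ^ μ * w) = t ^ A * F (t, w)
  hz : ∀ j < n, (dw^[j] F) 0 = 0
  hnz : (dw^[n] F) 0 ≠ 0

def Concl (S : ℝ × ℝ → ℝ) (ηc : ℝ) (N μ : ℕ) (κ : ℝ → ℝ) : Prop :=
  ∀ ε > 0, ∃ ε' > 0, Cov S ηc (RegI N μ κ (ball 0 ε)) (RegI N μ κ (ball 0 ε'))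

theorem ev_pos {P : ℝ → Prop} (h : ∀ᶠ t in 𝓝 (0:ℝ), P t) : ∃ r > 0, ∀ t, 0 < t → t < r → P t := by
  obtain ⟨r, hr, h⟩ := Metric.eventually_nhds_iff.1 h
  exact ⟨r, hr, fun t h1 h2 => h (by rw [Real.dist_eq, sub_zero, abs_of_pos h1]; exact h2)⟩

theorem tendsto_pow0 {q : ℕ} (hq : 0 < q) : Tendsto (fun τ : ℝ => τ ^ q) (𝓝 0) (𝓝 0) := by
  have : Continuous (fun τ : ℝ => τ ^ q) := by fun_prop
  simpa [hq.ne'] using this.tendsto 0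

theorem an_pow {κ : ℝ → ℝ} (hκ : AnalyticAt ℝ κ 0) {q : ℕ} (hq : 0 < q) :
    AnalyticAt ℝ (fun τ => κ (τ ^ q)) 0 :=
  AnalyticAt.fun_comp_of_eq hκ (f := fun τ : ℝ => τ ^ q) (analyticAt_id.pow _) (by simp [hq.ne'])

theorem inner_cov (S : ℝ × ℝ → ℝ) (ηc : ℝ) (n : ℕ) (hn : 0 < n)
    (IH : ∀ m < n, ∀ N μ A κ F, Node S N μ A m κ F → Concl S ηc N μ κ)
    (N μ A : ℕ) (hN : 0 < N) (hNμ : N ≤ μ) (hA : n * μ ≤ A) (κ : ℝ → ℝ) (hκ : AnalyticAt ℝ κ 0)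
    (p q : ℕ) (hp : 0 < p) (hq : 0 < q) (ct : ℕ → ℝ → ℝ) (hct : ∀ j, AnalyticAt ℝ (ct j) 0)
    (hctne : ∃ j < n, ct j 0 ≠ 0) (hctl : ct (n - 1) 0 = 0)
    (u : ℝ × ℝ → ℝ) (hu : AnalyticAt ℝ u 0) (hu0 : u 0 ≠ 0)
    (hS : ∀ M > 0, ∃ r > 0, ∀ τ w : ℝ, 0 < τ → τ < r → |w| < M →
      S (τ ^ (N * q), τ ^ (N * q) * κ (τ ^ q) + τ ^ (μ * q + p) * w) =
      τ ^ (A * q + p * n) * (∑ j ∈ Finset.range n, ct j τ * w ^ j + w ^ n * u (τ ^ q, τ ^ p * w)))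
    (ε : ℝ) (hε : 0 < ε) (w0 : ℝ) :
    ∃ e > 0, Cov S ηc (RegI N μ κ (ball 0 ε))
      (RegI (N * q) (μ * q + p) (fun τ => κ (τ ^ q)) (ball w0 e)) := by
  set F : ℝ × ℝ → ℝ := fun z => ∑ j ∈ Finset.range n, ct j z.1 * (w0 + z.2) ^ j +
    (w0 + z.2) ^ n * u (z.1 ^ q, z.1 ^ p * (w0 + z.2)) with hFdef
  have hadd : AnalyticAt ℝ (fun z : ℝ × ℝ => w0 + z.2) 0 := analyticAt_const.add analyticAt_snd
  have hF : AnalyticAt ℝ F 0 := by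
    refine AnalyticAt.add ?_ (AnalyticAt.mul (hadd.pow n) ?_)
    · refine Finset.analyticAt_fun_sum _ fun j _ => AnalyticAt.mul ?_ (hadd.pow j)
      exact AnalyticAt.fun_comp_of_eq (hct j) (f := fun z : ℝ × ℝ => z.1) analyticAt_fst rfl
    · refine hu.fun_comp_of_eq ((by fun_prop : ContDiff ℝ ⊤ fun z : ℝ × ℝ => (z.1 ^ q, z.1 ^ p * (w0 + z.2))).contDiffAt.analyticAt) ?_
      simp [hp.ne', hq.ne']
  set Q : Polynomial ℝ := ∑ j ∈ Finset.range n, Polynomial.C (ct j 0) * Polynomial.X ^ j +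
    Polynomial.C (u 0) * Polynomial.X ^ n with hQ
  have hcoef : ∀ j, Q.coeff j = if j < n then ct j 0 else if j = n then u 0 else 0 := by
    intro j
    rw [hQ, Polynomial.coeff_add, Polynomial.finsetSum_coeff]
    simp only [Polynomial.coeff_C_mul, Polynomial.coeff_X_pow, mul_ite, mul_one, mul_zero,
      Finset.sum_ite_eq, Finset.mem_range]
    by_cases h : j < n
    · simp [h, h.ne]
    · simp [h]
  have hdeg : Q.natDegree = n := by
    apply Polynomial.natDegree_eq_of_le_of_coeff_ne_zero
    · rw [Polynomial.natDegree_le_iff_coeff_eq_zero]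
      intro j hj
      rw [hcoef]; simp [hj.ne', not_lt.2 hj.le]
    · rw [hcoef]; simpa using hu0
  have hpo : ∀ᶠ w in 𝓝 (0:ℝ), F (0, w) = (Q.comp (Polynomial.X + Polynomial.C w0)).eval w := by
    refine .of_forall fun w => ?_
    simp only [hFdef, hQ, Polynomial.eval_comp, Polynomial.eval_add, Polynomial.eval_finsetSum,
      Polynomial.eval_mul, Polynomial.eval_C, Polynomial.eval_pow, Polynomial.eval_X]
    rw [zero_pow hq.ne', zero_pow hp.ne', zero_mul, add_comm w w0, mul_comm (u 0)]
    rfl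
  obtain ⟨m0, hm0, hm0'⟩ := poly_order Q n hn hdeg (by rw [hcoef, if_pos (by omega)]; exact hctl)
    (by obtain ⟨j, hj, h⟩ := hctne; exact ⟨j, hj, by rw [hcoef, if_pos hj]; exact h⟩) w0
  have hex : ∃ m, (dw^[m] F) 0 ≠ 0 := ⟨m0, by
    rw [← (dw_poly hF _ hpo m0).self_of_nhds] at hm0'; exact hm0'⟩
  classical
  set m := Nat.find hex with hm
  have hmn : m < n := lt_of_le_of_lt (Nat.find_le (by
    rw [← (dw_poly hF _ hpo m0).self_of_nhds] at hm0'; exact hm0')) hm0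
  have hNq : N * q ≤ μ * q + p := (Nat.mul_le_mul_right q hNμ).trans (Nat.le_add_right _ _)
  have hnode : Node S (N * q) (μ * q + p) (A * q + p * n) m
      (fun τ => κ (τ ^ q) + τ ^ (μ * q + p - N * q) * w0) F := by
    refine ⟨by positivity, hNq, ?_, ?_, hF, ?_, ?_, Nat.find_spec hex⟩
    · calc m * (μ * q + p) ≤ n * (μ * q + p) := Nat.mul_le_mul_right _ hmn.le
        _ = (n * μ) * q + p * n := by ring
        _ ≤ A * q + p * n := by gcongr
    · exact (an_pow hκ hq).add ((analyticAt_id.pow _).mul analyticAt_const)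
    · obtain ⟨r, hr, h⟩ := hS (|w0| + 1) (by positivity)
      refine ⟨min r 1, by positivity, fun t w ht htr hw => ?_⟩
      rw [shift_id hNq]
      exact h t (w0 + w) ht (htr.trans_le (min_le_left _ _))
        ((abs_add_le _ _).trans_lt (by linarith [hw.trans_le (min_le_right r 1)]))
    · intro j hj
      by_contra h
      exact Nat.find_min hex hj h
  obtain ⟨e, he, hcov⟩ := IH m hmn _ _ _ _ _ hnode 1 one_pos
  refine ⟨e, he, hcov.mono ?_ ?_⟩
  · have hev : ∀ᶠ τ in 𝓝 (0:ℝ), |τ ^ p| * (|w0| + 1) < ε := by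
      have : Continuous (fun τ : ℝ => |τ ^ p| * (|w0| + 1)) := by fun_prop
      have h := this.tendsto 0
      rw [zero_pow hp.ne', abs_zero, zero_mul] at h
      exact h.eventually (gt_mem_nhds hε)
    filter_upwards [ev_small (N * q) (by positivity) _ hev] with a ha
    rintro P ⟨τ, w, ht, hw, rfl⟩ hP
    have h := ha τ ht hP
    refine ⟨τ ^ q, τ ^ p * (w0 + w), by positivity, ?_, ?_⟩
    · rw [mem_ball_zero_iff, Real.norm_eq_abs] at hw ⊢
      rw [abs_mul]
      refine lt_of_le_of_lt ?_ h
      gcongr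
      exact (abs_add_le _ _).trans (by linarith)
    · rw [shift_id hNq]; ring_nf
  · refine .of_forall fun a => ?_
    rintro P ⟨τ, w, ht, hw, rfl⟩ _ _
    refine ⟨τ, w - w0, ht, by rw [mem_ball_zero_iff, ← dist_eq_norm]; exact hw, ?_⟩
    rw [shift_id hNq, add_sub_cancel]

theorem outer_cov (S : ℝ × ℝ → ℝ) (ηc : ℝ) (hη : 0 < ηc) (n : ℕ) (hn : 0 < n)
    (N μ A : ℕ) (hN : 0 < N) (hNμ : N ≤ μ) (hA : n * μ ≤ A) (κ : ℝ → ℝ) (hκ : AnalyticAt ℝ κ 0)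
    (p q : ℕ) (hp : 0 < p) (hq : 0 < q) (ct : ℕ → ℝ → ℝ) (hct : ∀ j, AnalyticAt ℝ (ct j) 0)
    (u : ℝ × ℝ → ℝ) (hu : AnalyticAt ℝ u 0) (hu0 : u 0 ≠ 0) (r : ℝ) (hr : 0 < r)
    (hS : ∀ τ w : ℝ, 0 < τ → τ < r → |w| < r →
      S (τ ^ (N * q), τ ^ (N * q) * κ (τ ^ q) + τ ^ (μ * q) * w) =
      τ ^ (A * q) * (∑ j ∈ Finset.range n, τ ^ (p * (n - j)) * ct j τ * w ^ j + w ^ n * u (τ ^ q, w)))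
    (σ : ℝ) (hσ : σ = 1 ∨ σ = -1)
    (ε : ℝ) (hε : 0 < ε) :
    ∃ e > 0, ∃ C > 0, Cov S ηc (RegI N μ κ (ball 0 ε))
      {P | ∃ τ w : ℝ, 0 < τ ∧ C * τ ^ p < σ * w ∧ σ * w < e ∧
        P = (τ ^ (N * q), τ ^ (N * q) * κ (τ ^ q) + τ ^ (μ * q) * w)} := by
  have hσ2 : σ * σ = 1 := by rcases hσ with h | h <;> simp [h]
  have hσa : |σ| = 1 := by rcases hσ with h | h <;> simp [h]
  have hσ0 : σ ≠ 0 := by rcases hσ with h | h <;> simp [h]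
  have hpr : ∀ f : ℝ × ℝ × ℝ → ℝ, ContDiff ℝ ⊤ f → AnalyticAt ℝ f 0 :=
    fun f hf => hf.contDiffAt.analyticAt
  obtain ⟨ε', hε', hle, C, hC, hg⟩ := leaf_good S ηc hη (N * q) (by positivity) (μ * q) p (A * q) n
    (Nat.mul_le_mul_right q hNμ) hp (by rw [← mul_assoc]; exact Nat.mul_le_mul_right q hA)
    (fun τ => κ (τ ^ q)) (an_pow hκ hq) σ hσ 1
    (Or.inr rfl) (fun h => absurd h hn.ne')
    (fun z => ∑ j ∈ Finset.range n, ct j z.1 * (σ ^ j * z.2.2 ^ (n - j)) +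
      σ ^ n * u (z.1 ^ q, σ * z.2.1))
    (by
      refine AnalyticAt.add ?_ (AnalyticAt.mul analyticAt_const ?_)
      · refine Finset.analyticAt_fun_sum _ fun j _ => AnalyticAt.mul ?_ (hpr _ (by fun_prop))
        exact AnalyticAt.fun_comp_of_eq (hct j) (f := fun z : ℝ × ℝ × ℝ => z.1) analyticAt_fst rfl
      · exact hu.fun_comp_of_eq ((by fun_prop : ContDiff ℝ ⊤ fun z : ℝ × ℝ × ℝ =>
          (z.1 ^ q, σ * z.2.1)).contDiffAt.analyticAt) (by simp [hq.ne']))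
    (by
      have h0 : ∑ j ∈ Finset.range n, ct j (0 : ℝ × ℝ × ℝ).1 * (σ ^ j * (0 : ℝ × ℝ × ℝ).2.2 ^ (n - j)) = 0 := by
        refine Finset.sum_eq_zero fun j hj => ?_
        have : n - j ≠ 0 := by have := Finset.mem_range.1 hj; omega
        simp [this]
      rw [h0, zero_add]
      have : u (0, 0) ≠ 0 := hu0
      simpa [hσ0, hq.ne'] using this) r hr
    (by
      intro τ v h1 h2 h3 h4 _
      have := hS τ (σ * v) h1 h2 (by rw [abs_mul, hσa, one_mul, abs_of_pos h3]; exact h4)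
      rw [show σ * (τ ^ (μ * q) * v) = τ ^ (μ * q) * (σ * v) by ring, this, mul_assoc]
      congr 1
      rw [mul_add, Finset.mul_sum]
      congr 1
      · refine Finset.sum_congr rfl fun j hj => ?_
        have hj' := Finset.mem_range.1 hj
        have hv : v ^ n = v ^ j * v ^ (n - j) := by rw [← pow_add]; congr 1; omega
        rw [one_mul, div_pow, ← pow_mul, mul_pow, hv]
        have : v ^ (n - j) ≠ 0 := by positivity
        field_simp
      · ring) ε hε
  refine ⟨ε', hε', C, hC, ?_⟩
  have h1 := Cov.single (R := RegI N μ κ (ball 0 ε)) (by positivity) hg (by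
    refine .of_forall fun a => ?_
    rintro P ⟨t, v, ht, hv, hv', rfl⟩ _
    have hv0 : 0 < v := lt_of_le_of_lt (by positivity) hv
    refine ⟨t ^ q, σ * v, by positivity, ?_, by ring_nf⟩
    rw [mem_ball_zero_iff, Real.norm_eq_abs, abs_mul, hσa, one_mul, abs_of_pos hv0]
    linarith)
  refine h1.mono (.of_forall fun a P hP _ => hP) (.of_forall fun a => ?_)
  rintro P ⟨τ, w, hτ, hw, hw', rfl⟩ _ _
  refine ⟨τ, σ * w, hτ, by simpa using hw, hw', ?_⟩
  have : σ * (τ ^ (μ * q) * (σ * w)) = (σ * σ) * (τ ^ (μ * q) * w) := by ring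
  rw [this, hσ2, one_mul]

theorem node_core (S : ℝ × ℝ → ℝ) (ηc : ℝ) (hη : 0 < ηc) (n : ℕ) (hn : 0 < n)
    (IH : ∀ m < n, ∀ N μ A κ F, Node S N μ A m κ F → Concl S ηc N μ κ)
    (N μ A : ℕ) (hN : 0 < N) (hNμ : N ≤ μ) (hA : n * μ ≤ A) (κ : ℝ → ℝ) (hκ : AnalyticAt ℝ κ 0)
    (c : ℕ → ℝ → ℝ) (hc : ∀ j, AnalyticAt ℝ (c j) 0) (hc0 : ∀ j < n, c j 0 = 0)
    (hcl : ∀ᶠ t in 𝓝 (0:ℝ), c (n - 1) t = 0)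
    (u : ℝ × ℝ → ℝ) (hu : AnalyticAt ℝ u 0) (hu0 : u 0 ≠ 0) (r : ℝ) (hr : 0 < r)
    (hS : ∀ t w : ℝ, 0 < t → t < r → |w| < r → S (t ^ N, t ^ N * κ t + t ^ μ * w) =
      t ^ A * (∑ j ∈ Finset.range n, c j t * w ^ j + w ^ n * u (t, w))) :
    Concl S ηc N μ κ := by
  intro ε hε
  by_cases hne : ∃ j < n, ¬ ∀ᶠ t in 𝓝 (0:ℝ), c j t = 0
  swap
  · push Not at hne
    have hall : ∀ᶠ t in 𝓝 (0:ℝ), ∀ j ∈ Finset.range n, c j t = 0 :=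
      (Finset.eventually_all _).2 fun j hj => hne j (Finset.mem_range.1 hj)
    obtain ⟨r1, hr1, h1⟩ := ev_pos hall
    refine leaf_both S ηc hη N hN μ A n hNμ hA κ hκ u hu hu0 (min r r1) (lt_min hr hr1) ?_ ε hε
    intro t w ht htr hw
    rw [hS t w ht (htr.trans_le (min_le_left _ _)) (hw.trans_le (min_le_left _ _)),
      Finset.sum_eq_zero, zero_add]
    intro j hj
    rw [h1 t ht (htr.trans_le (min_le_right _ _)) j hj, zero_mul]
  obtain ⟨p, q, hp, hq, ct, hct, hcct, hctne, hctz⟩ := newton n c hc hc0 hne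
  have hall : ∀ᶠ τ in 𝓝 (0:ℝ), (∀ j ∈ Finset.range n, c j (τ ^ q) = τ ^ (p * (n - j)) * ct j τ) ∧
      τ ^ q < r :=
    ((Finset.eventually_all _).2 fun j hj => hcct j (Finset.mem_range.1 hj)).and
      ((tendsto_pow0 hq).eventually (gt_mem_nhds hr))
  obtain ⟨r1, hr1, h1⟩ := ev_pos hall
  have key : ∀ τ w : ℝ, 0 < τ → τ < r1 → |w| < r →
      S (τ ^ (N * q), τ ^ (N * q) * κ (τ ^ q) + τ ^ (μ * q) * w) =
      τ ^ (A * q) * (∑ j ∈ Finset.range n, τ ^ (p * (n - j)) * ct j τ * w ^ j + w ^ n * u (τ ^ q, w)) := by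
    intro τ w hτ hτ1 hw
    obtain ⟨ha, hb⟩ := h1 τ hτ hτ1
    have := hS (τ ^ q) w (by positivity) hb hw
    rw [mul_comm N q, mul_comm μ q, mul_comm A q, pow_mul, pow_mul, pow_mul, this]
    congr 2
    exact Finset.sum_congr rfl fun j hj => by rw [ha j hj]
  have key' : ∀ τ w : ℝ, 0 < τ → τ < min r r1 → |w| < min r r1 →
      S (τ ^ (N * q), τ ^ (N * q) * κ (τ ^ q) + τ ^ (μ * q) * w) =
      τ ^ (A * q) * (∑ j ∈ Finset.range n, τ ^ (p * (n - j)) * ct j τ * w ^ j + w ^ n * u (τ ^ q, w)) :=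
    fun τ w h1 h2 h3 => key τ w h1 (h2.trans_le (min_le_right _ _)) (h3.trans_le (min_le_left _ _))
  obtain ⟨e1, he1, C1, hC1, hcov1⟩ := outer_cov S ηc hη n hn N μ A hN hNμ hA κ hκ p q hp hq ct hct
    u hu hu0 _ (lt_min hr hr1) key' 1 (Or.inl rfl) ε hε
  obtain ⟨e2, he2, C2, hC2, hcov2⟩ := outer_cov S ηc hη n hn N μ A hN hNμ hA κ hκ p q hp hq ct hct
    u hu hu0 _ (lt_min hr hr1) key' (-1) (Or.inr rfl) ε hε
  have hin := inner_cov S ηc n hn IH N μ A hN hNμ hA κ hκ p q hp hq ct hct hctne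
    (hctz _ (by omega) hcl) u hu hu0 (by
      intro M hM
      have hev : ∀ᶠ τ in 𝓝 (0:ℝ), τ ^ p < r / M :=
        (tendsto_pow0 hp).eventually (gt_mem_nhds (by positivity))
      obtain ⟨r2, hr2, h2⟩ := ev_pos hev
      refine ⟨min r1 r2, lt_min hr1 hr2, fun τ w hτ hτr hw => ?_⟩
      have hlt := h2 τ hτ (hτr.trans_le (min_le_right _ _))
      have hw' : |τ ^ p * w| < r := by
        rw [abs_mul, abs_of_pos (by positivity)]
        rw [lt_div_iff₀ hM] at hlt
        refine lt_of_le_of_lt ?_ hlt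
        gcongr
      have hk := key τ (τ ^ p * w) hτ (hτr.trans_le (min_le_left _ _)) hw'
      rw [← mul_assoc, ← pow_add] at hk
      rw [hk, pow_add (τ) (A * q), mul_assoc (τ ^ (A * q))]
      congr 1
      rw [mul_add, Finset.mul_sum]
      congr 1
      · refine Finset.sum_congr rfl fun j hj => ?_
        have hj' := Finset.mem_range.1 hj
        have : τ ^ (p * n) = τ ^ (p * (n - j)) * (τ ^ p) ^ j := by
          rw [← pow_mul, ← pow_add, ← mul_add]; congr 2; omega
        rw [this, mul_pow]; ring
      · rw [mul_pow, ← pow_mul]; ring) ε hε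
  have hinner := cov_compact (isCompact_Icc (a := -(max C1 C2)) (b := max C1 C2)) (fun w0 _ => by
    obtain ⟨e, he, h⟩ := hin w0
    exact ⟨ball w0 e, mem_nhdsWithin_of_mem_nhds (ball_mem_nhds _ he), h⟩)
  refine ⟨min e1 e2, lt_min he1 he2, ((hcov1.union hcov2).union hinner).mono
    (.of_forall fun a P hP _ => hP) (.of_forall fun a => ?_)⟩
  rintro P ⟨t, w, ht, hw, rfl⟩ _ _
  rw [mem_ball_zero_iff, Real.norm_eq_abs, abs_lt, ← neg_lt, lt_min_iff, lt_min_iff] at hw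
  set τ := t ^ ((q:ℝ)⁻¹) with hτd
  have hτ : 0 < τ := Real.rpow_pos_of_pos ht _
  have htq : t = τ ^ q := (root_pow q hq t ht.le).symm
  have hτp : 0 < τ ^ p := by positivity
  rw [htq, ← pow_mul, ← pow_mul, mul_comm q N, mul_comm q μ]
  by_cases h1 : C1 * τ ^ p < w
  · exact Or.inl (Or.inl ⟨τ, w, hτ, by linarith, by linarith, rfl⟩)
  by_cases h2 : C2 * τ ^ p < -w
  · exact Or.inl (Or.inr ⟨τ, w, hτ, by linarith, by linarith, rfl⟩)
  refine Or.inr ⟨τ, w / τ ^ p, hτ, ?_, ?_⟩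
  · rw [mem_Icc, le_div_iff₀ hτp, div_le_iff₀ hτp]
    have g1 : C1 * τ ^ p ≤ max C1 C2 * τ ^ p := by gcongr; exact le_max_left _ _
    have g2 : C2 * τ ^ p ≤ max C1 C2 * τ ^ p := by gcongr; exact le_max_right _ _
    constructor <;> linarith
  · rw [pow_add]; field_simp

theorem node_all (S : ℝ × ℝ → ℝ) (ηc : ℝ) (hη : 0 < ηc) (n : ℕ) :
    ∀ N μ A κ F, Node S N μ A n κ F → Concl S ηc N μ κ := by
  induction n using Nat.strong_induction_on with
  | _ n IH =>
  intro N μ A κ F hnode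
  obtain ⟨r, hr, hS⟩ := hnode.hS
  rcases Nat.eq_zero_or_pos n with rfl | hn
  · intro ε hε
    exact leaf_both S ηc hη N hnode.hN μ A 0 hnode.hNμ hnode.hA κ hnode.hκ F hnode.hF
      hnode.hnz r hr (by simpa using hS) ε hε
  obtain ⟨φ, hφ, hφ0, hφz⟩ := ift (dw^[n-1] F) (dw_iter_analytic hnode.hF _) (hnode.hz _ (by omega)) (by
    have := hnode.hnz
    rwa [show n = (n - 1) + 1 by omega, Function.iterate_succ_apply'] at this)
  have hpt : ((0:ℝ), φ 0) = 0 := by rw [hφ0]; rfl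
  have hF' : AnalyticAt ℝ F (0, φ 0) := by rw [hpt]; exact hnode.hF
  have hsh := fun j => dw_shift hφ hF' j
  have hF1 : AnalyticAt ℝ (fun z : ℝ × ℝ => F (z.1, φ z.1 + z.2)) 0 := by
    refine hnode.hF.fun_comp_of_eq (f := fun z : ℝ × ℝ => (z.1, φ z.1 + z.2)) ?_ (by simp [hφ0])
    exact analyticAt_fst.prod ((AnalyticAt.fun_comp_of_eq hφ (f := fun z : ℝ × ℝ => z.1) analyticAt_fst rfl).add analyticAt_snd)
  obtain ⟨c, u, hc, hu, hexp, hcj, hun⟩ := taylor_w n _ hF1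
  have h00 : ∀ j, (dw^[j] (fun z : ℝ × ℝ => F (z.1, φ z.1 + z.2))) 0 = (dw^[j] F) 0 := by
    intro j
    have := (hsh j).self_of_nhds
    have h2 : (dw^[j] (fun z : ℝ × ℝ => F (z.1, φ z.1 + z.2))) 0 = (dw^[j] F) (0, 0) := by
      simpa [hφ0] using this
    exact h2
  refine cov_shift hnode.hN hnode.hNμ hφ hφ0 ?_
  obtain ⟨r1, hr1, hexp1⟩ := Metric.eventually_nhds_iff.1 hexp
  obtain ⟨r2, hr2, hφ2⟩ := Metric.continuousAt_iff.1 hφ.continuousAt (r / 2) (by positivity)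
  refine node_core S ηc hη n hn IH N μ A hnode.hN hnode.hNμ hnode.hA _
    (hnode.hκ.add ((analyticAt_id.pow _).mul hφ)) c hc ?_ ?_ u hu ?_ (min (r/2) (min r1 r2))
    (by positivity) ?_
  · intro j hj
    have h := (hcj j hj).self_of_nhds
    have h' : (dw^[j] (fun z : ℝ × ℝ => F (z.1, φ z.1 + z.2))) 0 = j.factorial * c j 0 := h
    rw [h00, hnode.hz j hj] at h'
    have : (j.factorial : ℝ) ≠ 0 := by exact_mod_cast Nat.factorial_ne_zero j
    simpa [this] using h'.symm
  · have hs : ∀ᶠ t in 𝓝 (0:ℝ), (dw^[n-1] (fun z : ℝ × ℝ => F (z.1, φ z.1 + z.2))) (t, 0) =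
        (dw^[n-1] F) (t, φ t + 0) := by
      have hcont : Tendsto (fun t : ℝ => ((t, 0) : ℝ × ℝ)) (𝓝 0) (𝓝 0) := by
        have : Continuous (fun t : ℝ => ((t, 0) : ℝ × ℝ)) := by fun_prop
        exact this.tendsto 0
      exact hcont.eventually (hsh (n - 1))
    filter_upwards [hs, hφz, hcj (n - 1) (by omega)] with t h1 h2 h3
    rw [h1, add_zero, h2] at h3
    have : ((n-1).factorial : ℝ) ≠ 0 := by exact_mod_cast Nat.factorial_ne_zero _
    simpa [this] using h3.symm
  · intro h
    rw [h, mul_zero, h00] at hun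
    exact hnode.hnz hun
  · intro t w ht htr hw
    rw [lt_min_iff, lt_min_iff] at htr hw
    rw [shift_id hnode.hNμ, hS t (φ t + w) ht (by linarith) ?_]
    · congr 1
      have := @hexp1 (t, w) (by
        rw [dist_eq_norm, sub_zero, Prod.norm_def, max_lt_iff]
        simp only [Real.norm_eq_abs]
        exact ⟨by rw [abs_of_pos ht]; exact htr.2.1, hw.2.1⟩)
      exact this
    · have := @hφ2 t (by rw [Real.dist_eq, sub_zero, abs_of_pos ht]; exact htr.2.2)
      rw [Real.dist_eq, hφ0, sub_zero] at this
      exact (abs_add_le _ _).trans_lt (by linarith)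

theorem ray_limit {S : ℝ × ℝ → ℝ} {p : FormalMultilinearSeries ℝ (ℝ × ℝ) ℝ}
    (hp : HasFPowerSeriesAt S p 0) (j : ℕ) (h : ∀ i < j, ∀ v : ℝ × ℝ, (p i fun _ => v) = 0) (v : ℝ × ℝ) :
    Tendsto (fun t : ℝ => S (t • v) / t ^ j) (𝓝[>] 0) (𝓝 (p j fun _ => v)) := by
  have hO := hp.isBigO_sub_partialSum_pow (j + 1)
  have htend : Tendsto (fun t : ℝ => t • v) (𝓝[>] 0) (𝓝 0) := by
    have : Continuous (fun t : ℝ => t • v) := by fun_prop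
    have h := this.tendsto 0
    rw [zero_smul] at h
    exact h.mono_left nhdsWithin_le_nhds
  have hO2 := hO.comp_tendsto htend
  obtain ⟨C, hC⟩ := hO2.bound
  rw [tendsto_iff_norm_sub_tendsto_zero]
  have hlim : Tendsto (fun t : ℝ => C * ‖v‖ ^ (j + 1) * t) (𝓝[>] 0) (𝓝 0) := by
    have : Continuous (fun t : ℝ => C * ‖v‖ ^ (j + 1) * t) := by fun_prop
    have h := this.tendsto 0
    rw [mul_zero] at h
    exact h.mono_left nhdsWithin_le_nhds
  refine squeeze_zero' (.of_forall fun _ => norm_nonneg _) ?_ hlim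
  filter_upwards [hC, self_mem_nhdsWithin] with t ht ht0
  have ht0' : 0 < t := ht0
  simp only [Function.comp, zero_add] at ht
  have hps : p.partialSum (j + 1) (t • v) = t ^ j * p j fun _ => v := by
    rw [FormalMultilinearSeries.partialSum, Finset.sum_range_succ, Finset.sum_eq_zero, zero_add]
    · have := (p j).map_smul_univ (fun _ => t) (fun _ => v)
      simpa using this
    · intro i hi
      exact h i (Finset.mem_range.1 hi) _
  rw [hps, norm_pow, norm_norm, norm_smul, mul_pow, Real.norm_of_nonneg ht0'.le] at ht
  have htj : 0 < t ^ j := by positivity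
  have e : S (t • v) / t ^ j - (p j fun _ => v) = (S (t • v) - t ^ j * p j fun _ => v) / t ^ j := by
    field_simp
  rw [e, norm_div, Real.norm_of_nonneg htj.le, div_le_iff₀ htj]
  refine ht.trans (le_of_eq ?_)
  rw [pow_succ t]; ring

theorem blow (S : ℝ × ℝ → ℝ) (p : FormalMultilinearSeries ℝ (ℝ × ℝ) ℝ)
    (hp : HasFPowerSeriesAt S p 0) (w0 : ℝ) (j : ℕ) (h : ∀ i < j, ∀ v : ℝ × ℝ, (p i fun _ => v) = 0) :
    ∃ F : ℝ × ℝ → ℝ, AnalyticAt ℝ F 0 ∧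
      (∀ᶠ z in 𝓝 (0 : ℝ × ℝ), S (z.1, z.1 * (w0 + z.2)) = z.1 ^ j * F z) ∧
      ∀ᶠ w in 𝓝 (0:ℝ), F (0, w) = p j fun _ => (1, w0 + w) := by
  have lim : ∀ (j : ℕ) (F : ℝ × ℝ → ℝ), (∀ i < j, ∀ v : ℝ × ℝ, (p i fun _ => v) = 0) → AnalyticAt ℝ F 0 →
      (∀ᶠ z in 𝓝 (0 : ℝ × ℝ), S (z.1, z.1 * (w0 + z.2)) = z.1 ^ j * F z) →
      ∀ᶠ w in 𝓝 (0:ℝ), F (0, w) = p j fun _ => (1, w0 + w) := by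
    intro j F hj hF hev
    have hcont : Tendsto (fun t : ℝ => ((0, t) : ℝ × ℝ)) (𝓝 0) (𝓝 0) := by
      have : Continuous (fun t : ℝ => ((0, t) : ℝ × ℝ)) := by fun_prop
      exact this.tendsto 0
    filter_upwards [hcont.eventually hF.eventually_analyticAt,
      hcont.eventually hev.eventually_nhds] with w h1 h2
    have ht : Tendsto (fun t : ℝ => ((t, w) : ℝ × ℝ)) (𝓝[>] 0) (𝓝 (0, w)) := by
      have : Continuous (fun t : ℝ => ((t, w) : ℝ × ℝ)) := by fun_prop
      exact (this.tendsto 0).mono_left nhdsWithin_le_nhds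
    have l1 := h1.continuousAt.tendsto.comp ht
    have l2 := ray_limit hp j hj (1, w0 + w)
    refine tendsto_nhds_unique (l1.congr' ?_) l2
    filter_upwards [ht.eventually h2, self_mem_nhdsWithin] with t h3 h4
    have h4' : 0 < t := h4
    simp only [Function.comp, Prod.smul_mk, smul_eq_mul, mul_one] at h3 ⊢
    rw [h3]
    field_simp
  suffices H : ∃ F : ℝ × ℝ → ℝ, AnalyticAt ℝ F 0 ∧
      (∀ᶠ z in 𝓝 (0 : ℝ × ℝ), S (z.1, z.1 * (w0 + z.2)) = z.1 ^ j * F z) by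
    obtain ⟨F, h1, h2⟩ := H
    exact ⟨F, h1, h2, lim j F h h1 h2⟩
  induction j with
  | zero =>
    refine ⟨fun z => S (z.1, z.1 * (w0 + z.2)), ?_, by simp⟩
    exact hp.analyticAt.fun_comp_of_eq ((by fun_prop : ContDiff ℝ ⊤ fun z : ℝ × ℝ =>
      (z.1, z.1 * (w0 + z.2))).contDiffAt.analyticAt) (by simp)
  | succ j ih =>
    obtain ⟨F, hF, hev⟩ := ih fun i hi => h i (by omega)
    obtain ⟨u, hu, hux⟩ := had_x F hF
    refine ⟨u, hu, ?_⟩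
    have hz := lim j F (fun i hi => h i (by omega)) hF hev
    have hsnd : Tendsto (fun z : ℝ × ℝ => z.2) (𝓝 0) (𝓝 0) := continuous_snd.tendsto 0
    filter_upwards [hev, hux, hsnd.eventually hz] with z h1 h2 h3
    rw [h1, h2, h3, h j (by omega)]
    rw [zero_add, pow_succ, mul_assoc]

theorem multi_poly {k : ℕ} (M : ContinuousMultilinearMap ℝ (fun _ : Fin k => ℝ × ℝ) ℝ) :
    ∃ Q : Polynomial ℝ, Q.natDegree ≤ k ∧ ∀ w : ℝ, M (fun _ => (1, w)) = Q.eval w := by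
  classical
  set m0 : Finset (Fin k) → Fin k → ℝ × ℝ := fun s => s.piecewise (fun _ => (0, 1)) (fun _ => (1, 0))
  refine ⟨∑ s : Finset (Fin k), Polynomial.C (M (m0 s)) * Polynomial.X ^ s.card, ?_, fun w => ?_⟩
  · refine Polynomial.natDegree_sum_le_of_forall_le _ _ fun s _ => ?_
    refine (Polynomial.natDegree_C_mul_X_pow_le _ _).trans ?_
    simpa using s.card_le_univ
  · have h := M.toMultilinearMap.map_add_univ (fun _ => w • ((0:ℝ), (1:ℝ))) (fun _ => (1, 0))
    have e : ((fun _ => w • ((0:ℝ), (1:ℝ))) + (fun _ => (1, 0)) : Fin k → ℝ × ℝ) = fun _ => (1, w) := by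
      ext i <;> simp
    rw [e] at h
    rw [Polynomial.eval_finsetSum]
    refine Eq.trans h (Finset.sum_congr rfl fun s _ => ?_)
    have e2 : s.piecewise (fun _ => w • ((0:ℝ), (1:ℝ))) (fun _ => (1, 0)) =
        s.piecewise (fun i => w • m0 s i) (m0 s) := by
      ext i <;> by_cases hi : i ∈ s <;> simp [m0, hi]
    rw [e2]
    have := M.toMultilinearMap.map_piecewise_smul (fun _ => w) (m0 s) s
    rw [this, Finset.prod_const, smul_eq_mul, Polynomial.eval_mul, Polynomial.eval_C,
      Polynomial.eval_pow, Polynomial.eval_X]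
    exact mul_comm _ _

theorem top_cov (S : ℝ × ℝ → ℝ) (hSa : AnalyticAt ℝ S 0) (b : ℝ) (hb : 0 < b)
    (hbline : ∀ s : ℝ, s ≠ 0 → lowestPart S (s, b * s) ≠ 0 ∧ lowestPart S (s, 0) ≠ 0)
    (ηc : ℝ) (hηc : 0 < ηc) :
    Cov S ηc (RegI 1 1 (fun _ => 0) (Icc 0 b)) (RegI 1 1 (fun _ => 0) (Icc 0 b)) := by
  obtain ⟨p, hp⟩ := hSa
  obtain ⟨rr, hpb⟩ := hp
  have hp : HasFPowerSeriesAt S p 0 := ⟨rr, hpb⟩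
  set k := vanishingOrder S with hk
  have hfac : ∀ (j : ℕ) (v : ℝ × ℝ), (j.factorial : ℝ) * (p j fun _ => v) = iteratedFDeriv ℝ j S 0 (fun _ => v) := by
    intro j v
    have := hpb.factorial_smul v j
    simpa using this
  have hlow : ∀ i < k, ∀ v : ℝ × ℝ, (p i fun _ => v) = 0 := by
    intro i hi v
    have h1 : iteratedFDeriv ℝ i S 0 = 0 := by
      by_contra h
      exact Nat.notMem_of_lt_sInf hi h
    have h2 := hfac i v
    rw [h1] at h2
    have h3 : (i.factorial : ℝ) ≠ 0 := by exact_mod_cast Nat.factorial_ne_zero i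
    exact (mul_eq_zero.1 h2).resolve_left h3
  have hlp : ∀ v, lowestPart S v = (k.factorial : ℝ) * (p k fun _ => v) := fun v => (hfac k v).symm
  have hne0 : (p k fun _ => ((1:ℝ), (0:ℝ))) ≠ 0 := by
    intro h
    have := (hbline 1 one_ne_zero).2
    rw [hlp, h, mul_zero] at this
    exact this rfl
  have hneb : (p k fun _ => ((1:ℝ), b)) ≠ 0 := by
    intro h
    have := (hbline 1 one_ne_zero).1
    rw [hlp, mul_one, h, mul_zero] at this
    exact this rfl
  obtain ⟨Q, hQd, hQ⟩ := multi_poly (p k)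
  have hQ0 : Q ≠ 0 := by
    rintro rfl
    rw [hQ] at hne0; simp at hne0
  have hF : ∀ w0 : ℝ, ∃ F : ℝ × ℝ → ℝ, AnalyticAt ℝ F 0 ∧
      (∃ r > 0, ∀ t w : ℝ, 0 < t → t < r → |w| < r →
        S (t ^ 1, t ^ 1 * w0 + t ^ 1 * w) = t ^ k * F (t, w)) ∧
      ∀ᶠ w in 𝓝 (0:ℝ), F (0, w) = Q.eval (w0 + w) := by
    intro w0
    obtain ⟨F, h1, h2, h3⟩ := blow S p hp w0 k hlow
    refine ⟨F, h1, ?_, by simpa only [hQ] using h3⟩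
    obtain ⟨r, hr, h⟩ := Metric.eventually_nhds_iff.1 h2
    refine ⟨r, hr, fun t w ht htr hw => ?_⟩
    have := @h (t, w) (by
        rw [dist_eq_norm, sub_zero, Prod.norm_def, max_lt_iff]
        simp only [Real.norm_eq_abs]
        exact ⟨by rw [abs_of_pos ht]; exact htr, hw⟩)
    rw [pow_one, ← mul_add]
    exact this
  refine cov_compact isCompact_Icc ?_
  intro w0 hw0
  obtain ⟨F, hFa, ⟨r, hr, hS⟩, hFQ⟩ := hF w0
  have hF00 : F 0 = Q.eval w0 := by
    have := hFQ.self_of_nhds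
    rw [add_zero] at this
    exact this
  have half : ∀ σ : ℝ, (σ = 1 ∨ σ = -1) → Q.eval w0 ≠ 0 → ∃ ε' > 0,
      Cov S ηc (RegI 1 1 (fun _ => w0) {w | 0 < σ * w ∧ σ * w < b})
        (RegI 1 1 (fun _ => w0) {w | 0 ≤ σ * w ∧ σ * w < ε'}) := by
    intro σ hσ hq
    refine leaf_half S ηc hηc 1 one_pos 1 k 0 le_rfl (by simp) _ analyticAt_const F hFa
      (by rw [hF00]; exact hq) r hr (by simpa using hS) σ hσ b hb
  have tr : ∀ {I J : Set ℝ}, (∀ w ∈ I, w0 + w ∈ J) → 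
      RegI 1 1 (fun _ => w0) I ⊆ RegI 1 1 (fun _ => 0) J := by
    rintro I J hIJ P ⟨t, w, ht, hw, rfl⟩
    exact ⟨t, w0 + w, ht, hIJ w hw, by ring_nf⟩
  have tr' : ∀ {I J : Set ℝ}, (∀ w ∈ J, w - w0 ∈ I) → 
      RegI 1 1 (fun _ => 0) J ⊆ RegI 1 1 (fun _ => w0) I := by
    rintro I J hIJ P ⟨t, w, ht, hw, rfl⟩
    exact ⟨t, w - w0, ht, hIJ w hw, by ring_nf⟩
  rcases eq_or_lt_of_le hw0.1 with h0 | h0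
  · obtain ⟨e, he, hc⟩ := half 1 (Or.inl rfl) (by rw [← hQ, ← h0]; exact hne0)
    refine ⟨Ico 0 e, ?_, hc.mono (.of_forall fun a P hP _ => tr (J := Icc 0 b) ?_ hP)
      (.of_forall fun a P hP _ _ => tr' ?_ hP)⟩
    · rw [← h0]
      refine mem_of_superset (inter_mem_nhdsWithin _ (Iio_mem_nhds he)) ?_
      rintro x ⟨h1, h2⟩; exact ⟨h1.1, h2⟩
    · rintro w ⟨h1, h2⟩; exact ⟨by linarith, by linarith⟩
    · rintro w ⟨h1, h2⟩; exact ⟨by linarith, by linarith⟩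
  rcases eq_or_lt_of_le hw0.2 with h1 | h1
  · obtain ⟨e, he, hc⟩ := half (-1) (Or.inr rfl) (by rw [← hQ, h1]; exact hneb)
    refine ⟨Ioc (b - e) b, ?_, hc.mono (.of_forall fun a P hP _ => tr (J := Icc 0 b) ?_ hP)
      (.of_forall fun a P hP _ _ => tr' ?_ hP)⟩
    · rw [h1]
      refine mem_of_superset (inter_mem_nhdsWithin _ (Ioi_mem_nhds (sub_lt_self b he))) ?_
      rintro x ⟨h1, h2⟩; exact ⟨h2, h1.2⟩
    · rintro w ⟨h1, h2⟩; exact ⟨by linarith, by linarith⟩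
    · rintro w ⟨h1, h2⟩; exact ⟨by linarith, by linarith⟩
  have hpo : ∀ᶠ w in 𝓝 (0:ℝ), F (0, w) = (Polynomial.taylor w0 Q).eval w := by
    filter_upwards [hFQ] with w hw
    rw [hw, Polynomial.taylor_eval, add_comm]
  have hT0 : Polynomial.taylor w0 Q ≠ 0 := by
    intro h; exact hQ0 ((Polynomial.taylor_injective w0) (by rw [h, map_zero]))
  have hj : ∃ j, (dw^[j] F) 0 ≠ 0 ∧ j ≤ k := by
    refine ⟨(Polynomial.taylor w0 Q).natDegree, ?_, by rw [Polynomial.natDegree_taylor]; exact hQd⟩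
    have h := (dw_poly hFa _ hpo (Polynomial.taylor w0 Q).natDegree).self_of_nhds
    rw [← Polynomial.coeff_zero_eq_eval_zero, Polynomial.coeff_iterate_derivative] at h
    intro hcon
    rw [show ((0:ℝ), (0:ℝ)) = 0 from rfl, hcon] at h
    simp only [zero_add, Nat.descFactorial_self, nsmul_eq_mul] at h
    have h' := h.symm
    rw [mul_eq_zero, Nat.cast_eq_zero] at h'
    rcases h' with h' | h'
    · exact Nat.factorial_ne_zero _ h'
    · rw [Polynomial.coeff_natDegree, Polynomial.leadingCoeff_eq_zero] at h'
      exact hT0 h'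
  obtain ⟨j, hj1, hj2⟩ := hj
  classical
  have hex : ∃ j, (dw^[j] F) 0 ≠ 0 := ⟨j, hj1⟩
  have hnode : Node S 1 1 k (Nat.find hex) (fun _ => w0) F := by
    refine ⟨one_pos, le_rfl, ?_, analyticAt_const, hFa, ⟨r, hr, hS⟩, ?_, Nat.find_spec hex⟩
    · rw [mul_one]; exact (Nat.find_le hj1).trans hj2
    · intro i hi
      by_contra h
      exact Nat.find_min hex hi h
  obtain ⟨e, he, hc⟩ := node_all S ηc hηc _ _ _ _ _ _ hnode (min w0 (b - w0)) (lt_min h0 (by linarith))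
  refine ⟨ball w0 e, mem_nhdsWithin_of_mem_nhds (ball_mem_nhds _ he),
    hc.mono (.of_forall fun a P hP _ => tr (J := Icc 0 b) ?_ hP)
      (.of_forall fun a P hP _ _ => tr' ?_ hP)⟩
  · intro w hw
    rw [mem_ball_zero_iff, Real.norm_eq_abs, abs_lt] at hw
    have g1 := min_le_left w0 (b - w0)
    have g2 := min_le_right w0 (b - w0)
    exact ⟨by linarith, by linarith⟩
  · intro w hw
    rw [mem_ball_zero_iff, ← dist_eq_norm]; exact hw

/-- **Theorem 2.1 (two-dimensional resolution of singularities).** Let `S` be real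
analytic near the origin, not identically zero, with `S(0,0) = 0`, and let `b > 0` be such
that the lowest-degree part of `S` does not vanish on the lines bounding the triangle
`{0 ≤ x ≤ a, 0 ≤ y ≤ bx}` except at the origin. Then for any predetermined `η > 0` there
exist `a > 0`, a positive integer `N`, and finitely many sets `Dᵢ` whose closures cover the
triangle, such that each `Dᵢ` is the image under a coordinate change
`ηᵢ(x,y) = (x, ±y + kᵢ(x))` (with `kᵢ(x) = lᵢ x^{sᵢ} + …`, `sᵢ ≥ 1`, `kᵢ(x^N)` real
analytic) of a sliver `Dᵢ' = {0 < x < a, gᵢ(x) < y < Gᵢ(x)}` (with `gᵢ(x^N)`, `Gᵢ(x^N)`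
real analytic and `Gᵢ(x) = Hᵢ x^{Mᵢ} + …`, `Hᵢ > 0`, `Mᵢ ≥ 1`) on which `S ∘ ηᵢ` together
with its derivatives is comparable, with relative error `η`, to a monomial
`dᵢ x^{αᵢ} y^{βᵢ}` in the sense of (2.1)-(2.2). -/
theorem resolution_of_singularities_2d
    (S : ℝ × ℝ → ℝ) (US : Set (ℝ × ℝ)) (hUS : US ∈ 𝓝 (0:ℝ×ℝ))
    (hSa : AnalyticOnNhd ℝ S US) (hS0 : S 0 = 0)
    (hSnz : ¬ (∀ᶠ p in 𝓝 (0:ℝ×ℝ), S p = 0))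
    (b : ℝ) (hb : 0 < b)
    (hbline : ∀ s : ℝ, s ≠ 0 → lowestPart S (s, b * s) ≠ 0 ∧ lowestPart S (s, 0) ≠ 0)
    (ηc : ℝ) (hηc : 0 < ηc) :
    ∃ (a : ℝ) (N : ℕ) (nn : ℕ) (D : Fin nn → Set (ℝ × ℝ)), 0 < a ∧ 0 < N ∧
      {p : ℝ × ℝ | 0 ≤ p.1 ∧ p.1 ≤ a ∧ 0 ≤ p.2 ∧ p.2 ≤ b * p.1} =
        (⋃ i, closure (D i)) ∧
      ∀ i : Fin nn, ∃ (k g G : ℝ → ℝ) (σ li si Hi Mi αi di : ℝ) (βi : ℕ),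
        (σ = 1 ∨ σ = -1) ∧
        PuiseuxOn N a k ∧ LeadingTerm k li si ∧ 1 ≤ si ∧
        PuiseuxOn N a g ∧ PuiseuxOn N a G ∧
        LeadingTerm G Hi Mi ∧ 0 < Hi ∧ 1 ≤ Mi ∧
        (∃ q : ℚ, (q : ℝ) = αi) ∧ 0 ≤ αi ∧ di ≠ 0 ∧
        D i = (fun q : ℝ × ℝ => (q.1, σ * q.2 + k q.1)) '' sliverSet a g G ∧
        ((βi = 0 ∧ (∀ x, g x = 0) ∧ (∀ x ∈ Ioo (0:ℝ) a, G x = Hi * x ^ Mi) ∧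
          (∀ p ∈ sliverSet a g G, ∀ l : ℕ, (l : ℝ) ≤ αi →
            |pderiv2 l 0 (fun q => S (q.1, σ * q.2 + k q.1)) p -
                di * descProd αi l * p.1 ^ (αi - l)| <
              ηc * |di| * p.1 ^ (αi - l))) ∨
         (0 < βi ∧
          ((∀ x, g x = 0) ∨ ∃ hi mi : ℝ, 0 < hi ∧ Mi < mi ∧ LeadingTerm g hi mi) ∧
          (∀ p ∈ sliverSet a g G, ∀ l : ℕ, (l : ℝ) ≤ αi → ∀ mm : ℕ, mm ≤ βi →
            |pderiv2 l mm (fun q => S (q.1, σ * q.2 + k q.1)) p -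
                descProd αi l * descProd (βi : ℝ) mm * di *
                  p.1 ^ (αi - l) * p.2 ^ ((βi : ℝ) - (mm : ℝ))| ≤
              ηc * |di| * p.1 ^ (αi - l) * p.2 ^ ((βi : ℝ) - (mm : ℝ))))) := by
  have hcov := top_cov S (hSa 0 (mem_of_mem_nhds hUS)) b hb hbline ηc hηc
  have hR : ∀ p : ℝ × ℝ, p ∈ RegI 1 1 (fun _ => 0) (Icc 0 b) ↔ 0 < p.1 ∧ 0 ≤ p.2 ∧ p.2 ≤ b * p.1 := by
    rintro ⟨x, y⟩
    constructor
    · rintro ⟨t, w, ht, hw, h⟩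
      obtain ⟨rfl, rfl⟩ := Prod.mk.inj h
      have := hw.1
      have := hw.2
      simp only [pow_one, mul_zero, zero_add]
      refine ⟨ht, by positivity, ?_⟩
      rw [mul_comm]; gcongr
    · rintro ⟨h1, h2, h3⟩
      simp only at h1 h2 h3
      refine ⟨x, y / x, h1, ⟨by positivity, by rw [div_le_iff₀ h1]; exact h3⟩, ?_⟩
      simp only [pow_one, mul_zero, zero_add, Prod.mk.injEq, true_and]
      field_simp
  obtain ⟨N, hN, L, hgood, hev⟩ := hcov
  have hall : ∀ᶠ a in 𝓝[>] (0:ℝ), ∀ D ∈ L, Blk S ηc N a (D ∩ {p | p.1 < a}) :=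
    (Finset.eventually_all _).2 fun D hD => hgood D hD
  obtain ⟨a, ⟨⟨ha1, ha2⟩, hblk⟩, ha0⟩ := ((hev.and hall).and self_mem_nhdsWithin).exists
  have ha0' : 0 < a := ha0
  refine ⟨a, N, L.card, fun i => ((L.equivFin.symm i : L) : Set (ℝ × ℝ)) ∩ {p | p.1 < a}, ha0', hN, ?_,
    fun i => hblk _ (L.equivFin.symm i).2⟩
  have hFc : IsClosed {p : ℝ × ℝ | 0 ≤ p.1 ∧ p.1 ≤ a ∧ 0 ≤ p.2 ∧ p.2 ≤ b * p.1} := by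
    have c1 : IsClosed {p : ℝ × ℝ | 0 ≤ p.1} := isClosed_le (by fun_prop) (by fun_prop)
    have c2 : IsClosed {p : ℝ × ℝ | p.1 ≤ a} := isClosed_le (by fun_prop) (by fun_prop)
    have c3 : IsClosed {p : ℝ × ℝ | 0 ≤ p.2} := isClosed_le (by fun_prop) (by fun_prop)
    have c4 : IsClosed {p : ℝ × ℝ | p.2 ≤ b * p.1} := isClosed_le (by fun_prop) (by fun_prop)
    exact c1.inter (c2.inter (c3.inter c4))
  have hUc : IsClosed (⋃ i : Fin L.card, closure (((L.equivFin.symm i : L) : Set (ℝ × ℝ)) ∩ {p | p.1 < a})) :=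
    isClosed_iUnion_of_finite fun i => isClosed_closure
  apply Subset.antisymm
  · have hin : {p : ℝ × ℝ | 0 < p.1 ∧ p.1 < a ∧ 0 ≤ p.2 ∧ p.2 ≤ b * p.1} ⊆
        ⋃ i : Fin L.card, closure (((L.equivFin.symm i : L) : Set (ℝ × ℝ)) ∩ {p | p.1 < a}) := by
      rintro p ⟨h1, h2, h3, h4⟩
      obtain ⟨D, hD, h⟩ := mem_iUnion₂.1 (ha2 p ((hR p).2 ⟨h1, h3, h4⟩) h1 h2)
      exact mem_iUnion.2 ⟨L.equivFin ⟨D, hD⟩, by simpa using h⟩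
    rintro ⟨x, y⟩ ⟨h1, h2, h3, h4⟩
    simp only at h1 h2 h3 h4
    refine closure_minimal hin hUc ?_
    have hcont : Tendsto (fun s : ℝ => (((1 - s) * x + s * (a / 2), (1 - s) * y) : ℝ × ℝ)) (𝓝[>] 0)
        (𝓝 (x, y)) := by
      have : Continuous (fun s : ℝ => (((1 - s) * x + s * (a / 2), (1 - s) * y) : ℝ × ℝ)) := by fun_prop
      have h := this.tendsto 0
      simp only [sub_zero, one_mul, zero_mul, add_zero] at h
      exact h.mono_left nhdsWithin_le_nhds
    refine mem_closure_of_tendsto hcont ?_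
    have hlt : ∀ᶠ s in 𝓝[>] (0:ℝ), s < 1 := nhdsWithin_le_nhds (gt_mem_nhds one_pos)
    filter_upwards [hlt, self_mem_nhdsWithin] with s hs hs0
    have hs0' : 0 < s := hs0
    have hs1 : 0 < 1 - s := by linarith
    refine ⟨?_, ?_, ?_, ?_⟩
    · show 0 < (1 - s) * x + s * (a / 2)
      positivity
    · show (1 - s) * x + s * (a / 2) < a
      nlinarith
    · show 0 ≤ (1 - s) * y
      positivity
    · show (1 - s) * y ≤ b * ((1 - s) * x + s * (a / 2))
      have : (1 - s) * y ≤ (1 - s) * (b * x) := by gcongr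
      have : 0 < b * (s * (a / 2)) := by positivity
      nlinarith
  · refine iUnion_subset fun i => closure_minimal ?_ hFc
    rintro p hp
    obtain ⟨h1, h2, h3⟩ := (hR p).1 (ha1 _ (L.equivFin.symm i).2 hp)
    exact ⟨h1.le, le_of_lt hp.2, h2, h3⟩
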